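/- There exists M ∈ ℕ such that for every m ≥ M there is a perfect 4-interval strategy for the Ulam–Rényi game with 3 lies over U = {0,1,...,2^m−1}: that is, a winning strategy for the initial (constant-0) state of size N_min(2^m,3), all of whose questions are 4-interval questions. -/

import Mathlib

/-!
A state of the game is recorded by the word of levels of its support, read around the circle; an
element on level `3` may be eliminated by the next answer, and eliminated elements are dropped.
The proof plays three phases and keeps every state *well shaped* (`Shape`): around the circle the
levels form runs following one of two cyclic patterns of twelve runs (`cfg0`, `cfg1`), up to a
reflection.

*Shape.* `Shape.step` is the combinatorial core. In a well-shaped state one may choose the numbers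
`a 0`, `a 1`, `a 3` of elements of the question on levels `0`, `1`, `3` arbitrarily, and `a 2` as
close as possible to half of level `2`, and realise them by a question with at most eight changes of
membership around the circle whose two answers are again well shaped. For each pattern a short list
of ways to cut the twelve runs (each run is taken, left out, or cut once) covers all choices of the
`a i`: the level-`0` run and the level-`3` runs are always cut, so `a 0` and `a 3` are free, while
exactly one level-`2` run is cut, at a place dictated by `a 2`. That a pattern of cuts is
admissible for all lengths of the runs is a finite check (`step_of_pattern`). A question with at
most eight cyclic changes, or its complement, is a union of four intervals (`exists_question`).

*Counting.* After `Shape.step` only the type `(t₀, t₁, t₂, t₃)` matters. The volume `tvol` is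
additive over the two answers (`tvol_succ`), and a position with `r` rounds left must keep volume at
most `2 ^ r`.

* Opening (`typeWin_opening`): for `m` rounds every level is halved exactly, which leads to the type
  `(1, m, C(m,2), C(m,3))` with `r = Nmin m - m` rounds left and volume at most `2 ^ r`.
* Middle game (`typeWin_early`, `typeWin_late`): levels `0`, `1`, `2` are halved up to rounding, and
  the rounding error in volume, less than `binSum r 3`, is compensated on level `3`
  (`exists_balance`). About `2 log₂ m` rounds reduce the levels below `3` to at most one element.
  Meanwhile level `3`, initially of order `m ^ 3`, is only divided by a factor of order `m ^ 2`,
  while `binSum r 3` is polylogarithmic, as `r` is at most about `3 log₂ m`; so for large `m` there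
  are always enough elements on level `3`.
* End game (`win_low`): one element below level `3`, together with the right number of elements of
  level `3`, forms an optimal question.
-/

open scoped Classical

noncomputable section

namespace UlamRenyi

/-- A state of the Ulam–Rényi game with 3 lies over a universe of size `u`:
a function `U → {0,1,2,3,4}`. -/
abbrev State (u : ℕ) := Fin u → Fin 5

variable {u : ℕ}

/-- The set of elements lying on level `i` of the state `σ`. -/
def levelSet (σ : State u) (i : ℕ) : Set (Fin u) := {y | (σ y : ℕ) = i}

/-- The support of a state: the elements at level `≤ 3`. -/
def support (σ : State u) : Set (Fin u) := {y | (σ y : ℕ) ≤ 3}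

/-- A state is final if its support has at most one element. -/
def IsFinal (σ : State u) : Prop := (support σ).Subsingleton

/-- `stCount σ i = |σ⁻¹(i)|`. -/
def stCount (σ : State u) (i : ℕ) : ℕ := (levelSet σ i).ncard

/-- The type of a state: `(t₀, t₁, t₂, t₃)` with `tᵢ = |σ⁻¹(i)|`. -/
def stType (σ : State u) : ℕ × ℕ × ℕ × ℕ :=
  (stCount σ 0, stCount σ 1, stCount σ 2, stCount σ 3)

/-- The state resulting from the answer *yes* to question `Q` in state `σ`:
`σ_yes(y) = min (σ(y) + 1_{y ∉ Q}, 4)`. -/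
def yesState (σ : State u) (Q : Set (Fin u)) : State u := fun y =>
  ⟨min ((σ y : ℕ) + (if y ∈ Q then 0 else 1)) 4,
    Nat.lt_succ_of_le (Nat.min_le_right _ _)⟩

/-- The state resulting from the answer *no* to question `Q` in state `σ`:
`σ_no(y) = min (σ(y) + 1_{y ∈ Q}, 4)`. -/
def noState (σ : State u) (Q : Set (Fin u)) : State u := fun y =>
  ⟨min ((σ y : ℕ) + (if y ∈ Q then 1 else 0)) 4,
    Nat.lt_succ_of_le (Nat.min_le_right _ _)⟩

/-- The state resulting from answer `b` (`true` = yes, `false` = no). -/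
def ansState (σ : State u) (Q : Set (Fin u)) : Bool → State u
  | true => yesState σ Q
  | false => noState σ Q

/-- An interval of the universe: the empty set, or `[a,b] = {x | a ≤ x ≤ b}`. -/
def IsInterval (I : Set (Fin u)) : Prop :=
  I = ∅ ∨ ∃ a b : Fin u, I = Set.Icc a b

/-- A `k`-interval question: a union of at most `k` intervals. -/
def IsKIntervalQuestion (k : ℕ) (Q : Set (Fin u)) : Prop :=
  ∃ I : Fin k → Set (Fin u), (∀ t, IsInterval (I t)) ∧ Q = ⋃ t, I t

/-- The type of a question with respect to a state: `aᵢ = |Q ∩ σ⁻¹(i)|`. -/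
def qType (σ : State u) (Q : Set (Fin u)) (i : ℕ) : ℕ :=
  (Q ∩ levelSet σ i).ncard

/-- A strategy: a labelling of the nodes of the complete binary tree
(identified with finite lists of answers, `true` = yes) by questions. -/
abbrev Strategy (u : ℕ) := List Bool → Set (Fin u)

/-- The state reached from `σ` by playing strategy `S` along the answer sequence `bs`. -/
def play : State u → Strategy u → List Bool → State u
  | σ, _, [] => σ
  | σ, S, b :: bs => play (ansState σ (S []) b) (fun l => S (b :: l)) bs

/-- `S` is a winning strategy of size `q` for state `σ`: along every root-to-leaf
path of length `q` the resulting state is final. -/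
def IsWinning (σ : State u) (S : Strategy u) (q : ℕ) : Prop :=
  ∀ bs : List Bool, bs.length = q → IsFinal (play σ S bs)

/-- All the questions asked by `S` in a game of `q` rounds are `k`-interval questions. -/
def UsesKIntervals (S : Strategy u) (q k : ℕ) : Prop :=
  ∀ bs : List Bool, bs.length < q → IsKIntervalQuestion k (S bs)

/-- `binSum q e = ∑_{ℓ=0}^{e} C(q,ℓ)`. -/
def binSum (q e : ℕ) : ℕ := ∑ ℓ ∈ Finset.range (e + 1), Nat.choose q ℓ

/-- The `q`-th volume of a state: `w_q(σ) = ∑_{j=0}^{3} |σ⁻¹(j)| ∑_{ℓ=0}^{3-j} C(q,ℓ)`. -/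
def vol (σ : State u) (q : ℕ) : ℕ :=
  ∑ j ∈ Finset.range 4, stCount σ j * binSum q (3 - j)

/-- The character of a state: `ch(σ) = min {q : w_q(σ) ≤ 2^q}`. -/
def ch (σ : State u) : ℕ := sInf {q | vol σ q ≤ 2 ^ q}

/-- `N_min(2^m, 3) = min {q : 2^{q-m} ≥ ∑_{i=0}^{3} C(q,i)}`. -/
def Nmin (m : ℕ) : ℕ := sInf {q | 2 ^ m * binSum q 3 ≤ 2 ^ q}

/-- The initial, constant-0, state. -/
def initState (u : ℕ) : State u := fun _ => 0

/-- Cyclic successor of an index. -/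
def cSucc {r : ℕ} (i : Fin r) : Fin r := ⟨(i.val + 1) % r, Nat.mod_lt _ i.pos⟩

/-- Cyclic predecessor of an index. -/
def cPred {r : ℕ} (i : Fin r) : Fin r := ⟨(i.val + (r - 1)) % r, Nat.mod_lt _ i.pos⟩

/-- A cyclic list of (possibly empty) arcs representing the state `σ`:
the arcs are pairwise disjoint sets of cyclically consecutive elements of the
support, appearing around the circle in the order of their indices (with respect
to some base point of the circle), each arc lying on one level of `σ`, together
covering the support, and the levels of consecutive arcs differ by exactly 1. -/
structure ArcDecomp (σ : State u) (r : ℕ) where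
  /-- the level of each arc -/
  lvl : Fin r → ℕ
  /-- the arcs (possibly empty) -/
  arc : Fin r → Set (Fin u)
  /-- base point used to linearize the cyclic order -/
  base : Fin u
  lvl_le : ∀ i, lvl i ≤ 3
  arc_lvl : ∀ i, arc i ⊆ levelSet σ (lvl i)
  cover : ∀ y ∈ support σ, ∃! i, y ∈ arc i
  step : ∀ i : Fin r, lvl (cSucc i) = lvl i + 1 ∨ lvl i = lvl (cSucc i) + 1
  ordered : ∀ i j : Fin r, i < j → ∀ x ∈ arc i, ∀ y ∈ arc j, x - base < y - base

/-- The number of arcs of the decomposition lying on level `ℓ`. -/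
def arcCountAt {σ : State u} {r : ℕ} (d : ArcDecomp σ r) (ℓ : ℕ) : ℕ :=
  (Finset.univ.filter fun i => d.lvl i = ℓ).card

/-- The decomposition has exactly `2i+1` arcs on level `i` for `i = 0,1,2`, and
exactly `3` arcs on level `3`. -/
def GoodCounts {σ : State u} (d : ArcDecomp σ 12) : Prop :=
  arcCountAt d 0 = 1 ∧ arcCountAt d 1 = 3 ∧ arcCountAt d 2 = 5 ∧ arcCountAt d 3 = 3

/-- A state is well-shaped if its shortest cyclic arc decomposition has exactly
`2i+1` arcs on level `i` for `i = 0,1,2` and exactly `3` arcs on level `3`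
(hence length 12). -/
def IsWellShaped (σ : State u) : Prop :=
  (∀ r : ℕ, Nonempty (ArcDecomp σ r) → 12 ≤ r) ∧
  ∃ d : ArcDecomp σ 12, GoodCounts d

/-- A state of type `(t₀,t₁,t₂,t₃)` is 0-typical if `t₀ = 0`, `t₂ ≥ t₁ - 1`
and `t₃ ≥ ch(σ)`. -/
def IsZeroTypical (σ : State u) : Prop :=
  stCount σ 0 = 0 ∧ stCount σ 1 ≤ stCount σ 2 + 1 ∧ ch σ ≤ stCount σ 3

/-- A state is 4-interval nice if it is well shaped and admits a winning strategy
of size `ch(σ)` all of whose questions are 4-interval questions. -/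
def FourIntervalNice (σ : State u) : Prop :=
  IsWellShaped σ ∧
  ∃ S : Strategy u, IsWinning σ S (ch σ) ∧ UsesKIntervals S (ch σ) 4

end UlamRenyi

namespace UlamRenyi

/-! ### Words, blocks and rounds -/

/-- The word with run lengths and letters prescribed by `p`; run lengths may be `0`. -/
def expand {α : Type} : List (ℕ × α) → List α
  | [] => []
  | (n, c) :: p => List.replicate n c ++ expand p

/-- `Blocks w [c₁, …, cₖ]`: the word `w` lies in the language `c₁* c₂* ⋯ cₖ*`. -/
inductive Blocks {α : Type} : List α → List α → Prop
  | nil : Blocks [] []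
  | cons {c : α} {w cs : List α} : Blocks w (c :: cs) → Blocks (c :: w) (c :: cs)
  | skip {c : α} {w cs : List α} : Blocks w cs → Blocks w (c :: cs)

/-- Greedy decision procedure for `Blocks`. -/
def blocksB {α : Type} [DecidableEq α] : List α → List α → Bool
  | w, [] => w.isEmpty
  | w, c :: cs => blocksB (w.dropWhile (fun x => decide (x = c))) cs

section Words

variable {α β : Type}

theorem Blocks.replicate_append {c : α} {w cs : List α} (h : Blocks w (c :: cs)) (n : ℕ) :
    Blocks (List.replicate n c ++ w) (c :: cs) := by
  induction n with
  | zero => simpa using h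
  | succ n ih => rw [List.replicate_succ, List.cons_append]; exact ih.cons

theorem Blocks.of_dropWhile [DecidableEq α] {c : α} {cs : List α} (w : List α)
    (h : Blocks (w.dropWhile (fun x => decide (x = c))) cs) : Blocks w (c :: cs) := by
  induction w with
  | nil => exact h.skip
  | cons x w ih =>
    by_cases hx : x = c
    · subst hx
      exact (ih (by simpa using h)).cons
    · exact Blocks.skip (by simpa [hx] using h)

theorem Blocks.of_blocksB [DecidableEq α] {cs w : List α} (h : blocksB w cs = true) :
    Blocks w cs := by
  induction cs generalizing w with
  | nil => simp [blocksB] at h; subst h; exact Blocks.nil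
  | cons c cs ih => exact Blocks.of_dropWhile w (ih h)

/-- Replacing every letter of a word by a run of that letter, possibly empty, preserves `Blocks`. -/
theorem Blocks.expand {p : List (ℕ × α)} {cs : List α} (h : Blocks (p.map Prod.snd) cs) :
    Blocks (expand p) cs := by
  generalize hw : p.map Prod.snd = w at h
  induction h generalizing p with
  | nil => simp at hw; subst hw; exact Blocks.nil
  | skip _ ih => exact (ih hw).skip
  | cons _ ih =>
    obtain _ | ⟨⟨n, d⟩, p⟩ := p
    · simp at hw
    · simp only [List.map_cons, List.cons.injEq] at hw
      obtain ⟨rfl, hw⟩ := hw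
      exact (ih hw).replicate_append n

theorem Blocks.exists_expand {w cs : List α} (h : Blocks w cs) :
    ∃ p : List (ℕ × α), p.map Prod.snd = cs ∧ UlamRenyi.expand p = w := by
  induction h with
  | nil => exact ⟨[], rfl, rfl⟩
  | @skip c _ _ _ ih =>
    obtain ⟨p, hp, rfl⟩ := ih
    exact ⟨(0, c) :: p, by simp [hp], by simp [UlamRenyi.expand]⟩
  | @cons c _ _ _ ih =>
    obtain ⟨p, hp, rfl⟩ := ih
    obtain _ | ⟨⟨n, d⟩, p⟩ := p
    · simp at hp
    · simp only [List.map_cons, List.cons.injEq] at hp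
      obtain ⟨rfl, hp⟩ := hp
      exact ⟨(n + 1, d) :: p, by simp [hp],
        by simp [UlamRenyi.expand, List.replicate_succ]⟩

theorem Blocks.tail {x : α} {w cs : List α} (h : Blocks (x :: w) cs) : Blocks w cs := by
  generalize hw : x :: w = w' at h
  induction h with
  | nil => simp at hw
  | cons h _ => simp only [List.cons.injEq] at hw; obtain ⟨_, rfl⟩ := hw; exact h
  | skip _ ih => exact (ih hw).skip

theorem Blocks.of_cons_ne {x c : α} {w cs : List α} (h : Blocks (x :: w) (c :: cs)) (hx : x ≠ c) :
    Blocks (x :: w) cs := by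
  cases h with
  | cons _ => exact absurd rfl hx
  | skip h => exact h

theorem Blocks.append {v w cs ds : List α} (h : Blocks v cs) (h' : Blocks w ds) :
    Blocks (v ++ w) (cs ++ ds) := by
  induction h with
  | nil => exact h'
  | cons _ ih => exact ih.cons
  | skip _ ih => exact ih.skip

theorem Blocks.append_last {c : α} {w cs : List α} (h : Blocks w (cs ++ [c])) :
    Blocks (w ++ [c]) (cs ++ [c]) := by
  generalize hd : cs ++ [c] = ds at h
  induction h generalizing cs with
  | nil => simp at hd
  | cons _ ih => exact (ih hd).cons
  | @skip d w ds h ih =>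
    match cs, hd with
    | [], hd =>
      simp only [List.nil_append, List.cons.injEq] at hd
      obtain ⟨rfl, rfl⟩ := hd
      cases h
      exact Blocks.cons (Blocks.skip Blocks.nil)
    | e :: cs, hd =>
      simp only [List.cons_append, List.cons.injEq] at hd
      exact (ih hd.2).skip

theorem Blocks.reverse {w cs : List α} (h : Blocks w cs) : Blocks w.reverse cs.reverse := by
  induction h with
  | nil => exact Blocks.nil
  | cons _ ih =>
    rw [List.reverse_cons] at ih
    rw [List.reverse_cons, List.reverse_cons]
    exact ih.append_last
  | skip _ ih =>
    rw [List.reverse_cons]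
    have := ih.append (Blocks.skip (c := ‹α›) Blocks.nil)
    simpa using this

theorem Blocks.map {w cs : List α} (f : α → β) (h : Blocks w cs) :
    Blocks (w.map f) (cs.map f) := by
  induction h with
  | nil => exact Blocks.nil
  | cons _ ih => exact ih.cons
  | skip _ ih => exact ih.skip

theorem Blocks.mem {w cs : List α} (h : Blocks w cs) {x : α} (hx : x ∈ w) : x ∈ cs := by
  induction h with
  | nil => exact hx
  | cons _ ih =>
    rcases List.mem_cons.1 hx with rfl | hx
    · exact List.mem_cons_self
    · exact ih hx
  | skip _ ih => exact List.mem_cons_of_mem _ (ih hx)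

theorem expand_append (p q : List (ℕ × α)) : expand (p ++ q) = expand p ++ expand q := by
  induction p with
  | nil => rfl
  | cons a p ih => simp [expand, ih]

theorem expand_reverse (p : List (ℕ × α)) : expand p.reverse = (expand p).reverse := by
  induction p with
  | nil => rfl
  | cons a p ih => simp [expand, expand_append, ih]

theorem map_expand (f : α → β) (p : List (ℕ × α)) :
    (expand p).map f = expand (p.map fun x => (x.1, f x.2)) := by
  induction p with
  | nil => rfl
  | cons a p ih => simp [expand, ih]

theorem filterMap_expand (f : α → Option β) (p : List (ℕ × α)) :
    (expand p).filterMap f = expand (p.filterMap fun x => (f x.2).map fun y => (x.1, y)) := by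
  induction p with
  | nil => rfl
  | cons a p ih =>
    obtain ⟨n, c⟩ := a
    rw [expand, List.filterMap_append, ih, List.filterMap_replicate, List.filterMap_cons]
    cases h : f c <;> simp [expand]

end Words

/-- The fate of an element on level `x.1` under the answer `b`, where `x.2` records whether it
belongs to the question: it stays, or climbs one level, or is eliminated. -/
def fate (b : Bool) (x : ℕ × Bool) : Option ℕ :=
  if x.2 = b then some x.1 else if x.1 < 3 then some (x.1 + 1) else none

/-- The word of levels after the answer `b` to the question encoded by `l`. -/
def child (b : Bool) (l : List (ℕ × Bool)) : List ℕ := l.filterMap (fate b)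

/-- The nine alternating letters `b, !b, b, …, b`. -/
def alt (b : Bool) : List Bool := [b, !b, b, !b, b, !b, b, !b, b]

/-- A question, given by its membership bits along the word, changes at most eight times around
the circle; so it, or its complement, is a union of four intervals. -/
def BitsOK (bits : List Bool) : Prop := ∃ b, Blocks bits (alt b)

/-- `Win r w`: Questioner wins in `r` rounds from a state whose support, read in increasing order,
has the word of levels `w`, asking only questions satisfying `BitsOK`. -/
def Win : ℕ → List ℕ → Prop
  | 0, w => w.length ≤ 1
  | r + 1, w => ∃ l : List (ℕ × Bool), l.map Prod.fst = w ∧ BitsOK (l.map Prod.snd) ∧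
      ∀ b, Win r (child b l)

/-! ### Symmetries -/

theorem alt_not (b : Bool) : (alt b).map Bool.not = alt (!b) := by cases b <;> rfl

theorem alt_reverse (b : Bool) : (alt b).reverse = alt b := by cases b <;> rfl

theorem BitsOK.reverse {bits : List Bool} (h : BitsOK bits) : BitsOK bits.reverse := by
  obtain ⟨b, h⟩ := h
  exact ⟨b, by rw [← alt_reverse]; exact h.reverse⟩

theorem BitsOK.not {bits : List Bool} (h : BitsOK bits) : BitsOK (bits.map Bool.not) := by
  obtain ⟨b, h⟩ := h
  exact ⟨!b, by rw [← alt_not]; exact h.map _⟩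

theorem BitsOK.rotate {bits : List Bool} (h : BitsOK bits) (n : ℕ) : BitsOK (bits.rotate n) := by
  induction n generalizing bits with
  | zero => simpa using h
  | succ n ih =>
    cases bits with
    | nil => simpa using h
    | cons x w =>
      rw [List.rotate_cons_succ]
      apply ih
      obtain ⟨b, h⟩ := h
      by_cases hx : x = b
      · subst hx
        exact ⟨x, (h.tail).append_last (cs := [x, !x, x, !x, x, !x, x, !x])⟩
      · have hx' : x = !b := by cases x <;> cases b <;> simp_all
        subst hx'
        refine ⟨!b, ?_⟩
        have h1 := (h.of_cons_ne hx).tail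
        have h2 := h1.append ((Blocks.skip Blocks.nil).cons : Blocks [!b] [!b])
        simpa [alt] using h2

theorem child_rotate (b : Bool) (l : List (ℕ × Bool)) (n : ℕ) :
    child b l ~r child b (l.rotate n) := by
  have h : l ~r l.rotate n := ⟨n, rfl⟩
  rw [List.isRotated_iff_mod] at h
  obtain ⟨k, hk, h⟩ := h
  rw [← h, List.rotate_eq_drop_append_take hk]
  conv_lhs => rw [← List.take_append_drop k l]
  simp only [child, List.filterMap_append]
  exact List.isRotated_append

theorem child_not (b : Bool) (l : List (ℕ × Bool)) :
    child b (l.map fun x => (x.1, !x.2)) = child (!b) l := by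
  simp only [child, List.filterMap_map]
  congr 1
  funext x
  obtain ⟨i, c⟩ := x
  cases b <;> cases c <;> simp [fate]

theorem Win.rotate {r : ℕ} {w w' : List ℕ} (h : Win r w) (hw : w ~r w') : Win r w' := by
  induction r generalizing w w' with
  | zero =>
    have := hw.perm.length_eq
    simp only [Win] at h ⊢
    omega
  | succ r ih =>
    obtain ⟨l, rfl, hb, hc⟩ := h
    obtain ⟨n, rfl⟩ := hw
    refine ⟨l.rotate n, by rw [List.map_rotate], by rw [List.map_rotate]; exact hb.rotate n, ?_⟩
    exact fun b => ih (hc b) (child_rotate b l n)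

/-! ### Shapes and halving questions -/

/-- Levels of the arcs of the first kind of well-shaped state. -/
def cfg0 : List ℕ := [2, 1, 0, 1, 2, 3, 2, 1, 2, 3, 2, 3]

/-- Levels of the arcs of the second kind of well-shaped state. -/
def cfg1 : List ℕ := [2, 1, 0, 1, 2, 1, 2, 3, 2, 3, 2, 3]

/-- The words which, read around the circle from a suitable point and in a suitable direction,
consist of (possibly empty) runs on the levels listed in `cfg0` or `cfg1`. -/
def Shape (w : List ℕ) : Prop :=
  ∃ v, (w ~r v ∨ w.reverse ~r v) ∧ (Blocks v cfg0 ∨ Blocks v cfg1)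

/-- There is an admissible question with `a i` elements on each level `i` both of whose answers
lead to well-shaped words. -/
def Step (w : List ℕ) (a : ℕ → ℕ) : Prop :=
  ∃ l : List (ℕ × Bool), l.map Prod.fst = w ∧ BitsOK (l.map Prod.snd) ∧
    (∀ i < 4, l.count (i, true) = a i) ∧ ∀ b, Shape (child b l)

theorem Shape.rotate {w w' : List ℕ} (h : Shape w) (hw : w ~r w') : Shape w' := by
  obtain ⟨v, hv, hb⟩ := h
  exact ⟨v, hv.imp (fun h => hw.symm.trans h) (fun h => hw.symm.reverse.trans h), hb⟩

theorem Shape.reverse {w : List ℕ} (h : Shape w) : Shape w.reverse := by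
  obtain ⟨v, hv, hb⟩ := h
  exact ⟨v, by rw [List.reverse_reverse]; exact hv.symm, hb⟩

theorem Shape.lt_four {w : List ℕ} (h : Shape w) : ∀ x ∈ w, x < 4 := by
  obtain ⟨v, hv, hb⟩ := h
  intro x hx
  have hx : x ∈ v := by
    rcases hv with hv | hv
    · exact hv.mem_iff.1 hx
    · exact hv.mem_iff.1 (List.mem_reverse.2 hx)
  have h0 : ∀ y ∈ cfg0, y < 4 := by decide
  have h1 : ∀ y ∈ cfg1, y < 4 := by decide
  rcases hb with hb | hb
  · exact h0 x (hb.mem hx)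
  · exact h1 x (hb.mem hx)

theorem Step.rotate {w w' : List ℕ} {a : ℕ → ℕ} (h : Step w a) (hw : w ~r w') : Step w' a := by
  obtain ⟨l, rfl, hb, ha, hc⟩ := h
  obtain ⟨n, rfl⟩ := hw
  refine ⟨l.rotate n, by rw [List.map_rotate], by rw [List.map_rotate]; exact hb.rotate n, ?_, ?_⟩
  · intro i hi
    rw [← ha i hi]
    exact (List.rotate_perm l n).count_eq _
  · exact fun b => (hc b).rotate (child_rotate b l n)

theorem Step.reverse {w : List ℕ} {a : ℕ → ℕ} (h : Step w a) : Step w.reverse a := by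
  obtain ⟨l, rfl, hb, ha, hc⟩ := h
  refine ⟨l.reverse, by rw [List.map_reverse], by rw [List.map_reverse]; exact hb.reverse, ?_, ?_⟩
  · intro i hi
    rw [← ha i hi, List.count_reverse]
  · intro b
    have := (hc b).reverse
    rwa [child, ← List.filterMap_reverse] at this

theorem count_fst (l : List (ℕ × Bool)) (i : ℕ) :
    (l.map Prod.fst).count i = l.count (i, true) + l.count (i, false) := by
  induction l with
  | nil => rfl
  | cons x l ih =>
    obtain ⟨j, c⟩ := x
    simp only [List.map_cons, List.count_cons, ih]
    by_cases h : j = i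
    · subst h
      cases c <;> simp <;> omega
    · simp [h]

/-- Asking the complementary question. -/
theorem Step.compl {w : List ℕ} {a : ℕ → ℕ} (h : Step w fun i => w.count i - a i)
    (ha : ∀ i < 4, a i ≤ w.count i) : Step w a := by
  obtain ⟨l, rfl, hb, hl, hc⟩ := h
  refine ⟨l.map fun x => (x.1, !x.2), ?_, ?_, ?_, ?_⟩
  · rw [List.map_map]; rfl
  · have := hb.not
    rw [List.map_map] at this ⊢
    exact this
  · intro i hi
    have h1 : l.count (i, true) = (l.map Prod.fst).count i - a i := hl i hi
    have h2 := ha i hi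
    have h3 := count_fst l i
    have h4 : (l.map fun x => (x.1, !x.2)).count (i, true) = l.count (i, false) := by
      have hinj : Function.Injective fun x : ℕ × Bool => (x.1, !x.2) := by
        rintro ⟨a, b⟩ ⟨c, d⟩ h
        simpa using h
      exact List.count_map_of_injective l _ hinj (i, false)
    omega
  · intro b
    rw [child_not]
    exact hc (!b)

/-- How a question meets an arc: in everything, in nothing, in an initial segment, in a final
segment. -/
inductive Cut
  | all
  | none
  | init
  | final

/-- Number of elements on level `i` forced into the question. -/
def forced (i : ℕ) : List (ℕ × ℕ × Cut) → ℕ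
  | [] => 0
  | (n, j, .all) :: p => (if j = i then n else 0) + forced i p
  | (_, _, .none) :: p => forced i p
  | (_, _, .init) :: p => forced i p
  | (_, _, .final) :: p => forced i p

/-- Number of elements on level `i` lying on the arcs which are cut by the question. -/
def free (i : ℕ) : List (ℕ × ℕ × Cut) → ℕ
  | [] => 0
  | (_, _, .all) :: p => free i p
  | (_, _, .none) :: p => free i p
  | (n, j, .init) :: p => (if j = i then n else 0) + free i p
  | (n, j, .final) :: p => (if j = i then n else 0) + free i p

/-- The sequence of (level, membership) pairs met along a pattern. -/
def colors : List (ℕ × Cut) → List (ℕ × Bool)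
  | [] => []
  | (j, .all) :: p => (j, true) :: colors p
  | (j, .none) :: p => (j, false) :: colors p
  | (j, .init) :: p => (j, true) :: (j, false) :: colors p
  | (j, .final) :: p => (j, false) :: (j, true) :: colors p

theorem forced_le (i : ℕ) (p : List (ℕ × ℕ × Cut)) :
    forced i p + free i p ≤ (expand (p.map fun x => (x.1, x.2.1))).count i := by
  induction p with
  | nil => simp [forced, free]
  | cons x p ih =>
    obtain ⟨n, j, c⟩ := x
    simp only [List.map_cons, expand, List.count_append, List.count_replicate]
    cases c <;> simp only [forced, free, beq_iff_eq] <;> split_ifs <;> omega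

/-- The cut points of a pattern can be placed so as to realise any numbers `a i` between
`forced i` and `forced i + free i`. -/
theorem exists_pieces (p : List (ℕ × ℕ × Cut)) (a : ℕ → ℕ)
    (h : ∀ i, forced i p ≤ a i ∧ a i ≤ forced i p + free i p) :
    ∃ q : List (ℕ × ℕ × Bool), q.map Prod.snd = colors (p.map Prod.snd) ∧
      (expand q).map Prod.fst = expand (p.map fun x => (x.1, x.2.1)) ∧
      ∀ i, (expand q).count (i, true) = a i := by
  induction p generalizing a with
  | nil =>
    refine ⟨[], rfl, rfl, fun i => ?_⟩
    have := h i
    simp only [forced, free] at this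
    simp only [expand, List.count_nil]
    omega
  | cons x p ih =>
    obtain ⟨n, j, c⟩ := x
    cases c with
    | all =>
      obtain ⟨q, h1, h2, h3⟩ := ih (fun i => a i - if j = i then n else 0) (fun i => by
        have := h i
        simp only [forced, free] at this
        split_ifs at this ⊢ <;> omega)
      refine ⟨(n, j, true) :: q, by simp [h1, colors], by simp [h2, expand], fun i => ?_⟩
      have := h i
      simp only [forced, free] at this
      simp only [expand, List.count_append, h3, List.count_replicate]
      by_cases hij : j = i
      · simp [hij] at this ⊢
        omega
      · simp [hij]
    | none =>
      obtain ⟨q, h1, h2, h3⟩ := ih a h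
      refine ⟨(n, j, false) :: q, by simp [h1, colors], by simp [h2, expand], fun i => ?_⟩
      simp [expand, h3, List.count_replicate]
    | init =>
      obtain ⟨k, hk, hk1, hk2⟩ : ∃ k ≤ n, forced j p ≤ a j - k ∧ (a j - k) ≤ forced j p + free j p ∧
          k ≤ a j := by
        have := h j
        simp only [forced, free, if_true] at this
        exact ⟨min n (a j - forced j p), by omega, by omega, by omega, by omega⟩
      obtain ⟨q, h1, h2, h3⟩ := ih (fun i => a i - if j = i then k else 0) (fun i => by
        have := h i
        simp only [forced, free] at this
        by_cases hij : j = i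
        · subst hij; simp; omega
        · simp [hij] at this ⊢; omega)
      refine ⟨(k, j, true) :: (n - k, j, false) :: q, by simp [h1, colors], ?_, fun i => ?_⟩
      · simp only [expand, List.map_append, h2, List.map_replicate, List.map_cons]
        rw [← List.append_assoc, ← List.replicate_add]
        congr 2
        omega
      · simp only [expand, List.count_append, h3, List.count_replicate]
        by_cases hij : j = i
        · subst hij; simp; omega
        · simp [hij]
    | final =>
      obtain ⟨k, hk, hk1, hk2⟩ : ∃ k ≤ n, forced j p ≤ a j - k ∧ (a j - k) ≤ forced j p + free j p ∧
          k ≤ a j := by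
        have := h j
        simp only [forced, free, if_true] at this
        exact ⟨min n (a j - forced j p), by omega, by omega, by omega, by omega⟩
      obtain ⟨q, h1, h2, h3⟩ := ih (fun i => a i - if j = i then k else 0) (fun i => by
        have := h i
        simp only [forced, free] at this
        by_cases hij : j = i
        · subst hij; simp; omega
        · simp [hij] at this ⊢; omega)
      refine ⟨(n - k, j, false) :: (k, j, true) :: q, by simp [h1, colors], ?_, fun i => ?_⟩
      · simp only [expand, List.map_append, h2, List.map_replicate, List.map_cons]
        rw [← List.append_assoc, ← List.replicate_add]
        congr 2
        omega
      · simp only [expand, List.count_append, h3, List.count_replicate]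
        by_cases hij : j = i
        · subst hij; simp; omega
        · simp [hij]

/-- Sufficient computable test for `Shape`. -/
def shapeB (c : List ℕ) : Bool :=
  (List.range (c.length + 1)).any fun k =>
    blocksB (c.drop k ++ c.take k) cfg0 || blocksB (c.drop k ++ c.take k) cfg1 ||
    blocksB (c.reverse.drop k ++ c.reverse.take k) cfg0 ||
    blocksB (c.reverse.drop k ++ c.reverse.take k) cfg1

theorem shape_expand {q : List (ℕ × ℕ)} (h : shapeB (q.map Prod.snd) = true) :
    Shape (expand q) := by
  simp only [shapeB, List.any_eq_true, Bool.or_eq_true] at h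
  obtain ⟨k, _, h⟩ := h
  have key : ∀ (q : List (ℕ × ℕ)) (cfg : List ℕ),
      blocksB ((q.map Prod.snd).drop k ++ (q.map Prod.snd).take k) cfg = true →
      ∃ v, expand q ~r v ∧ Blocks v cfg := by
    intro q cfg h
    refine ⟨expand (q.drop k ++ q.take k), ?_, Blocks.expand ?_⟩
    · conv_lhs => rw [← List.take_append_drop k q]
      rw [expand_append, expand_append]
      exact List.isRotated_append
    · rw [List.map_append, List.map_drop, List.map_take]
      exact Blocks.of_blocksB h
  have hr : (q.map Prod.snd).reverse = q.reverse.map Prod.snd := by simp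
  rw [hr] at h
  rcases h with ((h | h) | h) | h
  · obtain ⟨v, h1, h2⟩ := key q _ h
    exact ⟨v, Or.inl h1, Or.inl h2⟩
  · obtain ⟨v, h1, h2⟩ := key q _ h
    exact ⟨v, Or.inl h1, Or.inr h2⟩
  · obtain ⟨v, h1, h2⟩ := key q.reverse _ h
    exact ⟨v, Or.inr (by rwa [← expand_reverse]), Or.inl h2⟩
  · obtain ⟨v, h1, h2⟩ := key q.reverse _ h
    exact ⟨v, Or.inr (by rwa [← expand_reverse]), Or.inr h2⟩

/-- Test that a pattern is admissible and that both answers lead to well-shaped words, however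
long the pieces are. -/
def patternB (p : List (ℕ × Cut)) : Bool :=
  let c := colors p
  (blocksB (c.map Prod.snd) (alt true) || blocksB (c.map Prod.snd) (alt false)) &&
    shapeB (c.filterMap (fate true)) && shapeB (c.filterMap (fate false))

theorem step_of_pattern (p : List (ℕ × ℕ × Cut)) (a : ℕ → ℕ)
    (hp : patternB (p.map Prod.snd) = true)
    (h : ∀ i < 4, forced i p ≤ a i ∧ a i ≤ forced i p + free i p) :
    Step (expand (p.map fun x => (x.1, x.2.1))) a := by
  obtain ⟨q, h1, h2, h3⟩ := exists_pieces p (fun i => if i < 4 then a i else forced i p) (fun i => by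
    by_cases hi : i < 4
    · simpa [hi] using h i hi
    · simp [hi])
  simp only [patternB, ← h1, Bool.and_eq_true, Bool.or_eq_true, List.filterMap_map] at hp
  obtain ⟨⟨hb, ht⟩, hf⟩ := hp
  refine ⟨expand q, h2, ?_, fun i hi => by rw [h3]; simp [hi], ?_⟩
  · rw [map_expand]
    have hq : (q.map Prod.snd).map Prod.snd =
        (q.map fun x => (x.1, x.2.2)).map Prod.snd := by simp
    rw [hq] at hb
    rcases hb with hb | hb
    · exact ⟨true, Blocks.expand (Blocks.of_blocksB hb)⟩
    · exact ⟨false, Blocks.expand (Blocks.of_blocksB hb)⟩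
  · intro b
    rw [child, filterMap_expand]
    apply shape_expand
    have hq : (q.filterMap fun x => (fate b x.2).map fun y => (x.1, y)).map Prod.snd =
        q.filterMap (fate b ∘ Prod.snd) := by
      rw [List.map_filterMap]
      congr 1
      funext x
      simp [Function.comp]
    rw [hq]
    cases b
    · exact hf
    · exact ht

/-! ### Cutting the runs

In the lemmas below the lengths of the twelve runs are, in order, `p x z y q g r w s e c k` for
`cfg0` and `p x z y u w q g c e d k` for `cfg1`; the runs on level `1` are `x`, `y`, `w`, and `z` is
the run on level `0`. The level-`1` part of the question is an initial segment of `x` (`left`), or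
all of `x` and a part of `w` (`middle`), or a final segment of `y` (`right`). Each case of a proof
takes some level-`2` runs completely and cuts a single one; as `a 2` is about half of level `2`,
the ranges of `a 2` obtained in this way always cover it.
-/

theorem step_cfg0_middle (p x z y q g r w s e c k : ℕ) (a : ℕ → ℕ) (h0 : a 0 ≤ z)
    (h10 : x ≤ a 1) (h11 : a 1 ≤ x + w) (h2 : 2 * a 2 ≤ p + q + r + s + c + 1)
    (h2' : p + q + r + s + c ≤ 2 * a 2 + 1) (h3 : a 3 ≤ g + e + k) :
    Step (expand [(p, 2), (x, 1), (z, 0), (y, 1), (q, 2), (g, 3), (r, 2), (w, 1), (s, 2), (e, 3), (c, 2), (k, 3)]) a := by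
  have h : (p ≤ a 2 ∧ a 2 ≤ p + s) ∨ (r ≤ a 2 ∧ a 2 ≤ r + p) ∨ (p ≤ a 2 ∧ a 2 ≤ p + r) ∨
      (p + r ≤ a 2 ∧ a 2 ≤ p + r + q) ∨ (p + q + r ≤ a 2 ∧ a 2 ≤ p + q + r + c) := by omega
  rcases h with h | h | h | h | h
  · exact step_of_pattern [(p, 2, .all), (x, 1, .all), (z, 0, .init), (y, 1, .none), (q, 2, .none), (g, 3, .final),
      (r, 2, .none), (w, 1, .final), (s, 2, .final), (e, 3, .init), (c, 2, .none), (k, 3, .final)]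
      a (by simp only [List.map]; decide +kernel) (by
        intro i hi
        interval_cases i <;> simp [forced, free] <;> omega)
  · exact step_of_pattern [(p, 2, .init), (x, 1, .all), (z, 0, .init), (y, 1, .none), (q, 2, .none), (g, 3, .final),
      (r, 2, .all), (w, 1, .init), (s, 2, .none), (e, 3, .final), (c, 2, .none), (k, 3, .final)]
      a (by simp only [List.map]; decide +kernel) (by
        intro i hi
        interval_cases i <;> simp [forced, free] <;> omega)
  · exact step_of_pattern [(p, 2, .all), (x, 1, .all), (z, 0, .init), (y, 1, .none), (q, 2, .none), (g, 3, .final),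
      (r, 2, .init), (w, 1, .final), (s, 2, .none), (e, 3, .final), (c, 2, .none), (k, 3, .final)]
      a (by simp only [List.map]; decide +kernel) (by
        intro i hi
        interval_cases i <;> simp [forced, free] <;> omega)
  · exact step_of_pattern [(p, 2, .all), (x, 1, .all), (z, 0, .init), (y, 1, .none), (q, 2, .final), (g, 3, .final),
      (r, 2, .all), (w, 1, .init), (s, 2, .none), (e, 3, .final), (c, 2, .none), (k, 3, .final)]
      a (by simp only [List.map]; decide +kernel) (by
        intro i hi
        interval_cases i <;> simp [forced, free] <;> omega)
  · exact step_of_pattern [(p, 2, .all), (x, 1, .all), (z, 0, .init), (y, 1, .none), (q, 2, .all), (g, 3, .final),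
      (r, 2, .all), (w, 1, .init), (s, 2, .none), (e, 3, .final), (c, 2, .init), (k, 3, .final)]
      a (by simp only [List.map]; decide +kernel) (by
        intro i hi
        interval_cases i <;> simp [forced, free] <;> omega)

theorem step_cfg0_left (p x z y q g r w s e c k : ℕ) (a : ℕ → ℕ) (h0 : a 0 ≤ z)
    (h11 : a 1 ≤ x) (h2 : 2 * a 2 ≤ p + q + r + s + c + 1)
    (h2' : p + q + r + s + c ≤ 2 * a 2 + 1) (h3 : a 3 ≤ g + e + k) :
    Step (expand [(p, 2), (x, 1), (z, 0), (y, 1), (q, 2), (g, 3), (r, 2), (w, 1), (s, 2), (e, 3), (c, 2), (k, 3)]) a := by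
  have h : (c ≤ a 2 ∧ a 2 ≤ c + p) ∨ (p ≤ a 2 ∧ a 2 ≤ p + s) ∨ (p ≤ a 2 ∧ a 2 ≤ p + r) ∨
      (p + r ≤ a 2 ∧ a 2 ≤ p + r + c) ∨ (p + s ≤ a 2 ∧ a 2 ≤ p + s + q) := by omega
  rcases h with h | h | h | h | h
  · exact step_of_pattern [(p, 2, .final), (x, 1, .init), (z, 0, .final), (y, 1, .none), (q, 2, .none), (g, 3, .final),
      (r, 2, .none), (w, 1, .none), (s, 2, .none), (e, 3, .final), (c, 2, .all), (k, 3, .init)]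
      a (by simp only [List.map]; decide +kernel) (by
        intro i hi
        interval_cases i <;> simp [forced, free] <;> omega)
  · exact step_of_pattern [(p, 2, .all), (x, 1, .init), (z, 0, .final), (y, 1, .none), (q, 2, .none), (g, 3, .final),
      (r, 2, .none), (w, 1, .none), (s, 2, .final), (e, 3, .init), (c, 2, .none), (k, 3, .final)]
      a (by simp only [List.map]; decide +kernel) (by
        intro i hi
        interval_cases i <;> simp [forced, free] <;> omega)
  · exact step_of_pattern [(p, 2, .all), (x, 1, .init), (z, 0, .final), (y, 1, .none), (q, 2, .none), (g, 3, .final),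
      (r, 2, .init), (w, 1, .none), (s, 2, .none), (e, 3, .final), (c, 2, .none), (k, 3, .final)]
      a (by simp only [List.map]; decide +kernel) (by
        intro i hi
        interval_cases i <;> simp [forced, free] <;> omega)
  · exact step_of_pattern [(p, 2, .all), (x, 1, .init), (z, 0, .final), (y, 1, .none), (q, 2, .none), (g, 3, .final),
      (r, 2, .all), (w, 1, .none), (s, 2, .none), (e, 3, .final), (c, 2, .init), (k, 3, .final)]
      a (by simp only [List.map]; decide +kernel) (by
        intro i hi
        interval_cases i <;> simp [forced, free] <;> omega)
  · exact step_of_pattern [(p, 2, .all), (x, 1, .init), (z, 0, .final), (y, 1, .none), (q, 2, .final), (g, 3, .init),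
      (r, 2, .none), (w, 1, .none), (s, 2, .all), (e, 3, .init), (c, 2, .none), (k, 3, .final)]
      a (by simp only [List.map]; decide +kernel) (by
        intro i hi
        interval_cases i <;> simp [forced, free] <;> omega)

theorem step_cfg0_right (p x z y q g r w s e c k : ℕ) (a : ℕ → ℕ) (h0 : a 0 ≤ z)
    (h11 : a 1 ≤ y) (h2 : 2 * a 2 ≤ p + q + r + s + c + 1)
    (h2' : p + q + r + s + c ≤ 2 * a 2 + 1) (h3 : a 3 ≤ g + e + k) :
    Step (expand [(p, 2), (x, 1), (z, 0), (y, 1), (q, 2), (g, 3), (r, 2), (w, 1), (s, 2), (e, 3), (c, 2), (k, 3)]) a := by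
  have h : (q ≤ a 2 ∧ a 2 ≤ q + p) ∨ (q ≤ a 2 ∧ a 2 ≤ q + c) ∨ (p + q ≤ a 2 ∧ a 2 ≤ p + q + s) ∨
      (q + c ≤ a 2 ∧ a 2 ≤ q + c + r) ∨ (c ≤ a 2 ∧ a 2 ≤ c + q) := by omega
  rcases h with h | h | h | h | h
  · exact step_of_pattern [(p, 2, .init), (x, 1, .none), (z, 0, .final), (y, 1, .final), (q, 2, .all), (g, 3, .init),
      (r, 2, .none), (w, 1, .none), (s, 2, .none), (e, 3, .final), (c, 2, .none), (k, 3, .final)]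
      a (by simp only [List.map]; decide +kernel) (by
        intro i hi
        interval_cases i <;> simp [forced, free] <;> omega)
  · exact step_of_pattern [(p, 2, .none), (x, 1, .none), (z, 0, .final), (y, 1, .final), (q, 2, .all), (g, 3, .init),
      (r, 2, .none), (w, 1, .none), (s, 2, .none), (e, 3, .final), (c, 2, .final), (k, 3, .init)]
      a (by simp only [List.map]; decide +kernel) (by
        intro i hi
        interval_cases i <;> simp [forced, free] <;> omega)
  · exact step_of_pattern [(p, 2, .all), (x, 1, .none), (z, 0, .final), (y, 1, .final), (q, 2, .all), (g, 3, .init),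
      (r, 2, .none), (w, 1, .none), (s, 2, .final), (e, 3, .init), (c, 2, .none), (k, 3, .final)]
      a (by simp only [List.map]; decide +kernel) (by
        intro i hi
        interval_cases i <;> simp [forced, free] <;> omega)
  · exact step_of_pattern [(p, 2, .none), (x, 1, .none), (z, 0, .final), (y, 1, .final), (q, 2, .all), (g, 3, .init),
      (r, 2, .final), (w, 1, .none), (s, 2, .none), (e, 3, .final), (c, 2, .all), (k, 3, .init)]
      a (by simp only [List.map]; decide +kernel) (by
        intro i hi
        interval_cases i <;> simp [forced, free] <;> omega)
  · exact step_of_pattern [(p, 2, .none), (x, 1, .none), (z, 0, .final), (y, 1, .final), (q, 2, .init), (g, 3, .final),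
      (r, 2, .none), (w, 1, .none), (s, 2, .none), (e, 3, .final), (c, 2, .all), (k, 3, .init)]
      a (by simp only [List.map]; decide +kernel) (by
        intro i hi
        interval_cases i <;> simp [forced, free] <;> omega)

theorem step_cfg1_middle (p x z y u w q g c e d k : ℕ) (a : ℕ → ℕ) (h0 : a 0 ≤ z)
    (h10 : x ≤ a 1) (h11 : a 1 ≤ x + w) (h2 : 2 * a 2 ≤ p + u + q + c + d + 1)
    (h2' : p + u + q + c + d ≤ 2 * a 2 + 1) (h3 : a 3 ≤ g + e + k) :
    Step (expand [(p, 2), (x, 1), (z, 0), (y, 1), (u, 2), (w, 1), (q, 2), (g, 3), (c, 2), (e, 3), (d, 2), (k, 3)]) a := by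
  have h : (p ≤ a 2 ∧ a 2 ≤ p + c) ∨ (p ≤ a 2 ∧ a 2 ≤ p + d) ∨ (c ≤ a 2 ∧ a 2 ≤ c + u) ∨
      (q ≤ a 2 ∧ a 2 ≤ q + p) ∨ (p + d ≤ a 2 ∧ a 2 ≤ p + d + q) := by omega
  rcases h with h | h | h | h | h
  · exact step_of_pattern [(p, 2, .all), (x, 1, .all), (z, 0, .init), (y, 1, .none), (u, 2, .none), (w, 1, .final),
      (q, 2, .none), (g, 3, .final), (c, 2, .final), (e, 3, .init), (d, 2, .none), (k, 3, .final)]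
      a (by simp only [List.map]; decide +kernel) (by
        intro i hi
        interval_cases i <;> simp [forced, free] <;> omega)
  · exact step_of_pattern [(p, 2, .all), (x, 1, .all), (z, 0, .init), (y, 1, .none), (u, 2, .none), (w, 1, .final),
      (q, 2, .none), (g, 3, .final), (c, 2, .none), (e, 3, .final), (d, 2, .init), (k, 3, .final)]
      a (by simp only [List.map]; decide +kernel) (by
        intro i hi
        interval_cases i <;> simp [forced, free] <;> omega)
  · exact step_of_pattern [(p, 2, .none), (x, 1, .all), (z, 0, .init), (y, 1, .none), (u, 2, .final), (w, 1, .init),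
      (q, 2, .none), (g, 3, .final), (c, 2, .all), (e, 3, .init), (d, 2, .none), (k, 3, .final)]
      a (by simp only [List.map]; decide +kernel) (by
        intro i hi
        interval_cases i <;> simp [forced, free] <;> omega)
  · exact step_of_pattern [(p, 2, .init), (x, 1, .all), (z, 0, .init), (y, 1, .none), (u, 2, .none), (w, 1, .final),
      (q, 2, .all), (g, 3, .init), (c, 2, .none), (e, 3, .final), (d, 2, .none), (k, 3, .final)]
      a (by simp only [List.map]; decide +kernel) (by
        intro i hi
        interval_cases i <;> simp [forced, free] <;> omega)
  · exact step_of_pattern [(p, 2, .all), (x, 1, .all), (z, 0, .init), (y, 1, .none), (u, 2, .none), (w, 1, .final),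
      (q, 2, .init), (g, 3, .final), (c, 2, .none), (e, 3, .final), (d, 2, .all), (k, 3, .final)]
      a (by simp only [List.map]; decide +kernel) (by
        intro i hi
        interval_cases i <;> simp [forced, free] <;> omega)

theorem step_cfg1_left (p x z y u w q g c e d k : ℕ) (a : ℕ → ℕ) (h0 : a 0 ≤ z)
    (h11 : a 1 ≤ x) (h2 : 2 * a 2 ≤ p + u + q + c + d + 1)
    (h2' : p + u + q + c + d ≤ 2 * a 2 + 1) (h3 : a 3 ≤ g + e + k) :
    Step (expand [(p, 2), (x, 1), (z, 0), (y, 1), (u, 2), (w, 1), (q, 2), (g, 3), (c, 2), (e, 3), (d, 2), (k, 3)]) a := by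
  have h : (p + c ≤ a 2 ∧ a 2 ≤ p + c + u) ∨ (p ≤ a 2 ∧ a 2 ≤ p + c) ∨
      (p + q ≤ a 2 ∧ a 2 ≤ p + q + d) ∨ (p ≤ a 2 ∧ a 2 ≤ p + q) ∨
      (c ≤ a 2 ∧ a 2 ≤ c + p) := by omega
  rcases h with h | h | h | h | h
  · exact step_of_pattern [(p, 2, .all), (x, 1, .init), (z, 0, .final), (y, 1, .none), (u, 2, .final), (w, 1, .none),
      (q, 2, .none), (g, 3, .final), (c, 2, .all), (e, 3, .init), (d, 2, .none), (k, 3, .final)]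
      a (by simp only [List.map]; decide +kernel) (by
        intro i hi
        interval_cases i <;> simp [forced, free] <;> omega)
  · exact step_of_pattern [(p, 2, .all), (x, 1, .init), (z, 0, .final), (y, 1, .none), (u, 2, .none), (w, 1, .none),
      (q, 2, .none), (g, 3, .final), (c, 2, .final), (e, 3, .init), (d, 2, .none), (k, 3, .final)]
      a (by simp only [List.map]; decide +kernel) (by
        intro i hi
        interval_cases i <;> simp [forced, free] <;> omega)
  · exact step_of_pattern [(p, 2, .all), (x, 1, .init), (z, 0, .final), (y, 1, .none), (u, 2, .none), (w, 1, .none),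
      (q, 2, .all), (g, 3, .init), (c, 2, .none), (e, 3, .final), (d, 2, .init), (k, 3, .final)]
      a (by simp only [List.map]; decide +kernel) (by
        intro i hi
        interval_cases i <;> simp [forced, free] <;> omega)
  · exact step_of_pattern [(p, 2, .all), (x, 1, .init), (z, 0, .final), (y, 1, .none), (u, 2, .none), (w, 1, .none),
      (q, 2, .final), (g, 3, .init), (c, 2, .none), (e, 3, .final), (d, 2, .none), (k, 3, .final)]
      a (by simp only [List.map]; decide +kernel) (by
        intro i hi
        interval_cases i <;> simp [forced, free] <;> omega)
  · exact step_of_pattern [(p, 2, .final), (x, 1, .init), (z, 0, .final), (y, 1, .none), (u, 2, .none), (w, 1, .none),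
      (q, 2, .none), (g, 3, .final), (c, 2, .all), (e, 3, .init), (d, 2, .none), (k, 3, .final)]
      a (by simp only [List.map]; decide +kernel) (by
        intro i hi
        interval_cases i <;> simp [forced, free] <;> omega)

theorem step_cfg1_right (p x z y u w q g c e d k : ℕ) (a : ℕ → ℕ) (h0 : a 0 ≤ z)
    (h11 : a 1 ≤ y) (h2 : 2 * a 2 ≤ p + u + q + c + d + 1)
    (h2' : p + u + q + c + d ≤ 2 * a 2 + 1) (h3 : a 3 ≤ g + e + k) :
    Step (expand [(p, 2), (x, 1), (z, 0), (y, 1), (u, 2), (w, 1), (q, 2), (g, 3), (c, 2), (e, 3), (d, 2), (k, 3)]) a := by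
  have h : (u + d ≤ a 2 ∧ a 2 ≤ u + d + c) ∨ (u + c ≤ a 2 ∧ a 2 ≤ u + c + d) ∨
      (u + c ≤ a 2 ∧ a 2 ≤ u + c + p) ∨ (u + d ≤ a 2 ∧ a 2 ≤ u + d + q) ∨
      (c ≤ a 2 ∧ a 2 ≤ c + u) := by omega
  rcases h with h | h | h | h | h
  · exact step_of_pattern [(p, 2, .none), (x, 1, .none), (z, 0, .final), (y, 1, .final), (u, 2, .all), (w, 1, .none),
      (q, 2, .none), (g, 3, .final), (c, 2, .init), (e, 3, .final), (d, 2, .all), (k, 3, .init)]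
      a (by simp only [List.map]; decide +kernel) (by
        intro i hi
        interval_cases i <;> simp [forced, free] <;> omega)
  · exact step_of_pattern [(p, 2, .none), (x, 1, .none), (z, 0, .final), (y, 1, .final), (u, 2, .all), (w, 1, .none),
      (q, 2, .none), (g, 3, .final), (c, 2, .all), (e, 3, .init), (d, 2, .final), (k, 3, .init)]
      a (by simp only [List.map]; decide +kernel) (by
        intro i hi
        interval_cases i <;> simp [forced, free] <;> omega)
  · exact step_of_pattern [(p, 2, .init), (x, 1, .none), (z, 0, .final), (y, 1, .final), (u, 2, .all), (w, 1, .none),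
      (q, 2, .none), (g, 3, .final), (c, 2, .all), (e, 3, .init), (d, 2, .none), (k, 3, .final)]
      a (by simp only [List.map]; decide +kernel) (by
        intro i hi
        interval_cases i <;> simp [forced, free] <;> omega)
  · exact step_of_pattern [(p, 2, .none), (x, 1, .none), (z, 0, .final), (y, 1, .final), (u, 2, .all), (w, 1, .none),
      (q, 2, .final), (g, 3, .init), (c, 2, .none), (e, 3, .final), (d, 2, .all), (k, 3, .init)]
      a (by simp only [List.map]; decide +kernel) (by
        intro i hi
        interval_cases i <;> simp [forced, free] <;> omega)
  · exact step_of_pattern [(p, 2, .none), (x, 1, .none), (z, 0, .final), (y, 1, .final), (u, 2, .init), (w, 1, .none),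
      (q, 2, .none), (g, 3, .final), (c, 2, .all), (e, 3, .init), (d, 2, .none), (k, 3, .final)]
      a (by simp only [List.map]; decide +kernel) (by
        intro i hi
        interval_cases i <;> simp [forced, free] <;> omega)

/-- If more than `x + w` elements of level `1` are wanted, the complementary question wants fewer
than `y`, and is provided by `step_cfg0_right`. -/
theorem step_cfg0 {v : List ℕ} (hv : Blocks v cfg0) (a : ℕ → ℕ) (h0 : a 0 ≤ v.count 0)
    (h1 : a 1 ≤ v.count 1) (h2 : 2 * a 2 ≤ v.count 2 + 1) (h2' : v.count 2 ≤ 2 * a 2 + 1)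
    (h3 : a 3 ≤ v.count 3) : Step v a := by
  obtain ⟨l, hl, rfl⟩ := hv.exists_expand
  obtain ⟨p, x, z, y, q, g, r, w, s, e, c, k, rfl⟩ : ∃ p x z y q g r w s e c k : ℕ,
      l = [(p, 2), (x, 1), (z, 0), (y, 1), (q, 2), (g, 3), (r, 2), (w, 1), (s, 2), (e, 3), (c, 2), (k, 3)] := by
    simp only [cfg0, List.map_eq_cons_iff, List.map_eq_nil_iff] at hl
    obtain ⟨⟨p, _⟩, _, rfl, rfl, ⟨x, _⟩, _, rfl, rfl, ⟨z, _⟩, _, rfl, rfl, ⟨y, _⟩, _, rfl, rfl,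
      ⟨q, _⟩, _, rfl, rfl, ⟨g, _⟩, _, rfl, rfl, ⟨r, _⟩, _, rfl, rfl, ⟨w, _⟩, _, rfl, rfl,
      ⟨s, _⟩, _, rfl, rfl, ⟨e, _⟩, _, rfl, rfl, ⟨c, _⟩, _, rfl, rfl, ⟨k, _⟩, _, rfl, rfl, rfl⟩ := hl
    exact ⟨p, x, z, y, q, g, r, w, s, e, c, k, rfl⟩
  have c0 : (expand [(p, 2), (x, 1), (z, 0), (y, 1), (q, 2), (g, 3), (r, 2), (w, 1), (s, 2), (e, 3), (c, 2), (k, 3)]).count 0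
      = z := by simp [expand, List.count_replicate]
  have c1 : (expand [(p, 2), (x, 1), (z, 0), (y, 1), (q, 2), (g, 3), (r, 2), (w, 1), (s, 2), (e, 3), (c, 2), (k, 3)]).count 1
      = x + y + w := by simp [expand, List.count_replicate]; omega
  have c2 : (expand [(p, 2), (x, 1), (z, 0), (y, 1), (q, 2), (g, 3), (r, 2), (w, 1), (s, 2), (e, 3), (c, 2), (k, 3)]).count 2
      = p + q + r + s + c := by simp [expand, List.count_replicate]; omega
  have c3 : (expand [(p, 2), (x, 1), (z, 0), (y, 1), (q, 2), (g, 3), (r, 2), (w, 1), (s, 2), (e, 3), (c, 2), (k, 3)]).count 3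
      = g + e + k := by simp [expand, List.count_replicate]; omega
  rw [c0] at h0
  rw [c1] at h1
  rw [c2] at h2 h2'
  rw [c3] at h3
  rcases le_or_gt (a 1) x with hx | hx
  · exact step_cfg0_left p x z y q g r w s e c k a h0 hx h2 h2' h3
  rcases le_or_gt (a 1) (x + w) with hw | hw
  · exact step_cfg0_middle p x z y q g r w s e c k a h0 hx.le hw h2 h2' h3
  apply Step.compl
  · apply step_cfg0_right p x z y q g r w s e c k <;> simp only [c0, c1, c2, c3] <;> omega
  · intro i hi
    interval_cases i <;> simp only [c0, c1, c2, c3] <;> omega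

/-- The analogue of `step_cfg0` for the second pattern. -/
theorem step_cfg1 {v : List ℕ} (hv : Blocks v cfg1) (a : ℕ → ℕ) (h0 : a 0 ≤ v.count 0)
    (h1 : a 1 ≤ v.count 1) (h2 : 2 * a 2 ≤ v.count 2 + 1) (h2' : v.count 2 ≤ 2 * a 2 + 1)
    (h3 : a 3 ≤ v.count 3) : Step v a := by
  obtain ⟨l, hl, rfl⟩ := hv.exists_expand
  obtain ⟨p, x, z, y, u, w, q, g, c, e, d, k, rfl⟩ : ∃ p x z y u w q g c e d k : ℕ,
      l = [(p, 2), (x, 1), (z, 0), (y, 1), (u, 2), (w, 1), (q, 2), (g, 3), (c, 2), (e, 3), (d, 2), (k, 3)] := by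
    simp only [cfg1, List.map_eq_cons_iff, List.map_eq_nil_iff] at hl
    obtain ⟨⟨p, _⟩, _, rfl, rfl, ⟨x, _⟩, _, rfl, rfl, ⟨z, _⟩, _, rfl, rfl, ⟨y, _⟩, _, rfl, rfl,
      ⟨q, _⟩, _, rfl, rfl, ⟨g, _⟩, _, rfl, rfl, ⟨r, _⟩, _, rfl, rfl, ⟨w, _⟩, _, rfl, rfl,
      ⟨s, _⟩, _, rfl, rfl, ⟨e, _⟩, _, rfl, rfl, ⟨c, _⟩, _, rfl, rfl, ⟨k, _⟩, _, rfl, rfl, rfl⟩ := hl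
    exact ⟨p, x, z, y, q, g, r, w, s, e, c, k, rfl⟩
  have c0 : (expand [(p, 2), (x, 1), (z, 0), (y, 1), (u, 2), (w, 1), (q, 2), (g, 3), (c, 2), (e, 3), (d, 2), (k, 3)]).count 0
      = z := by simp [expand, List.count_replicate]
  have c1 : (expand [(p, 2), (x, 1), (z, 0), (y, 1), (u, 2), (w, 1), (q, 2), (g, 3), (c, 2), (e, 3), (d, 2), (k, 3)]).count 1
      = x + y + w := by simp [expand, List.count_replicate]; omega
  have c2 : (expand [(p, 2), (x, 1), (z, 0), (y, 1), (u, 2), (w, 1), (q, 2), (g, 3), (c, 2), (e, 3), (d, 2), (k, 3)]).count 2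
      = p + u + q + c + d := by simp [expand, List.count_replicate]; omega
  have c3 : (expand [(p, 2), (x, 1), (z, 0), (y, 1), (u, 2), (w, 1), (q, 2), (g, 3), (c, 2), (e, 3), (d, 2), (k, 3)]).count 3
      = g + e + k := by simp [expand, List.count_replicate]; omega
  rw [c0] at h0
  rw [c1] at h1
  rw [c2] at h2 h2'
  rw [c3] at h3
  rcases le_or_gt (a 1) x with hx | hx
  · exact step_cfg1_left p x z y u w q g c e d k a h0 hx h2 h2' h3
  rcases le_or_gt (a 1) (x + w) with hw | hw
  · exact step_cfg1_middle p x z y u w q g c e d k a h0 hx.le hw h2 h2' h3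
  apply Step.compl
  · apply step_cfg1_right p x z y u w q g c e d k <;> simp only [c0, c1, c2, c3] <;> omega
  · intro i hi
    interval_cases i <;> simp only [c0, c1, c2, c3] <;> omega

/-- The elements of each level of a well-shaped word can be split by an admissible question in any
proportion on the levels `0`, `1` and `3`, and as evenly as possible on level `2`, so that both
answers lead again to well-shaped words. -/
theorem Shape.step {w : List ℕ} (hw : Shape w) (a : ℕ → ℕ) (h0 : a 0 ≤ w.count 0)
    (h1 : a 1 ≤ w.count 1) (h2 : 2 * a 2 ≤ w.count 2 + 1) (h2' : w.count 2 ≤ 2 * a 2 + 1)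
    (h3 : a 3 ≤ w.count 3) : Step w a := by
  obtain ⟨v, hv, hb⟩ := hw
  have hc : ∀ i, w.count i = v.count i := by
    intro i
    rcases hv with hv | hv
    · exact hv.perm.count_eq i
    · rw [← hv.perm.count_eq i, List.count_reverse]
  rw [hc] at h0 h1 h2 h2' h3
  have hs : Step v a := by
    rcases hb with hb | hb
    · exact step_cfg0 hb a h0 h1 h2 h2' h3
    · exact step_cfg1 hb a h0 h1 h2 h2' h3
  rcases hv with hv | hv
  · exact hs.rotate hv.symm
  · have := (hs.rotate hv.symm).reverse
    rwa [List.reverse_reverse] at this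

/-! ### Volumes -/

theorem binSum_zero (r : ℕ) : binSum r 0 = 1 := by simp [binSum]

theorem binSum_zero_left (e : ℕ) : binSum 0 e = 1 := by
  simp [binSum, Finset.sum_range_succ']

theorem binSum_succ (r e : ℕ) : binSum (r + 1) (e + 1) = binSum r (e + 1) + binSum r e := by
  have h1 : binSum (r + 1) (e + 1)
      = ∑ i ∈ Finset.range (e + 1), (r + 1).choose (i + 1) + 1 := by
    rw [binSum, Finset.sum_range_succ']
    simp
  have h2 : binSum r (e + 1) = ∑ i ∈ Finset.range (e + 1), r.choose (i + 1) + 1 := by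
    rw [binSum, Finset.sum_range_succ']
    simp
  have h3 : ∑ i ∈ Finset.range (e + 1), (r + 1).choose (i + 1)
      = binSum r e + ∑ i ∈ Finset.range (e + 1), r.choose (i + 1) := by
    rw [binSum, ← Finset.sum_add_distrib]
    exact Finset.sum_congr rfl fun i _ => Nat.choose_succ_succ _ _
  omega

theorem binSum_mono (r e : ℕ) : binSum r e ≤ binSum r (e + 1) := by
  rw [binSum, binSum, Finset.sum_range_succ _ (e + 1)]
  exact Nat.le_add_right _ _

theorem binSum_mono_left (e : ℕ) {r s : ℕ} (h : r ≤ s) : binSum r e ≤ binSum s e :=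
  Finset.sum_le_sum fun _ _ => Nat.choose_le_choose _ h

theorem binSum_le_two_pow (r e : ℕ) : binSum r e ≤ 2 ^ r := by
  induction r generalizing e with
  | zero => simp [binSum_zero_left]
  | succ r ih =>
    cases e with
    | zero => rw [binSum_zero]; exact Nat.one_le_two_pow
    | succ e =>
      have := ih e
      have := ih (e + 1)
      rw [binSum_succ, pow_succ]
      omega

/-- The `r`-th volume of a state of type `(t₀, t₁, t₂, t₃)`. -/
def tvol (r t₀ t₁ t₂ t₃ : ℕ) : ℕ :=
  t₀ * binSum r 3 + t₁ * binSum r 2 + t₂ * binSum r 1 + t₃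

/-- Conservation of volume. -/
theorem tvol_succ (r a₀ a₁ a₂ a₃ b₀ b₁ b₂ b₃ : ℕ) :
    tvol (r + 1) (a₀ + b₀) (a₁ + b₁) (a₂ + b₂) (a₃ + b₃) =
      tvol r a₀ (a₁ + b₀) (a₂ + b₁) (a₃ + b₂) + tvol r b₀ (b₁ + a₀) (b₂ + a₁) (b₃ + a₂) := by
  simp only [tvol, binSum_succ, binSum_zero]
  ring

/-! ### Winning by type -/

/-- Questioner wins in `r` rounds from every well-shaped word of type `(t₀, t₁, t₂, t₃)`. -/
def TypeWin (r t₀ t₁ t₂ t₃ : ℕ) : Prop :=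
  ∀ w, Shape w → w.count 0 = t₀ → w.count 1 = t₁ → w.count 2 = t₂ → w.count 3 = t₃ → Win r w

theorem count_child_zero (b : Bool) (l : List (ℕ × Bool)) :
    (child b l).count 0 = l.count (0, b) := by
  induction l with
  | nil => rfl
  | cons x l ih =>
    obtain ⟨j, c⟩ := x
    simp only [child] at ih ⊢
    by_cases hc : c = b
    · rw [List.filterMap_cons_some (b := j) (by simp [fate, hc]), List.count_cons, ih,
        List.count_cons]
      simp [hc]
    · by_cases hj : j < 3
      · rw [List.filterMap_cons_some (b := j + 1) (by simp [fate, hc, hj]), List.count_cons, ih,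
          List.count_cons]
        simp [hc]
      · rw [List.filterMap_cons_none (by simp [fate, hc, hj]), ih, List.count_cons]
        simp [hc]

theorem count_child_succ (b : Bool) (l : List (ℕ × Bool)) {i : ℕ} (hi : i < 3) :
    (child b l).count (i + 1) = l.count (i + 1, b) + l.count (i, !b) := by
  induction l with
  | nil => rfl
  | cons x l ih =>
    obtain ⟨j, c⟩ := x
    simp only [child] at ih ⊢
    by_cases hc : c = b
    · rw [List.filterMap_cons_some (b := j) (by simp [fate, hc]), List.count_cons, ih,
        List.count_cons, List.count_cons]
      subst hc
      by_cases hj : j = i + 1 <;> simp [hj]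
      omega
    · have hc' : (!b) = c := by cases b <;> cases c <;> simp_all
      by_cases hj : j < 3
      · rw [List.filterMap_cons_some (b := j + 1) (by simp [fate, hc, hj]), List.count_cons, ih,
          List.count_cons, List.count_cons]
        by_cases hj : j = i <;> simp [hj, hc, hc']
        omega
      · rw [List.filterMap_cons_none (by simp [fate, hc, hj]), ih, List.count_cons,
          List.count_cons]
        have : j ≠ i := by omega
        simp [hc, this]

/-- One round: a question with `aᵢ` elements inside and `bᵢ` elements outside on level `i`. -/
theorem TypeWin.step {r a₀ a₁ a₂ a₃ b₀ b₁ b₂ b₃ : ℕ} (h : a₂ ≤ b₂ + 1) (h' : b₂ ≤ a₂ + 1)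
    (hy : TypeWin r a₀ (a₁ + b₀) (a₂ + b₁) (a₃ + b₂))
    (hn : TypeWin r b₀ (b₁ + a₀) (b₂ + a₁) (b₃ + a₂)) :
    TypeWin (r + 1) (a₀ + b₀) (a₁ + b₁) (a₂ + b₂) (a₃ + b₃) := by
  intro w hw h0 h1 h2 h3
  obtain ⟨l, rfl, hb, hl, hc⟩ := hw.step (fun i => [a₀, a₁, a₂, a₃].getD i 0)
    (by simp [h0]) (by simp [h1]) (by simp [h2]; omega) (by simp [h2]; omega) (by simp [h3])
  have l0 := hl 0 (by norm_num)
  have l1 := hl 1 (by norm_num)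
  have l2 := hl 2 (by norm_num)
  have l3 := hl 3 (by norm_num)
  simp only [List.getD_cons_zero, List.getD_cons_succ] at l0 l1 l2 l3
  rw [count_fst] at h0 h1 h2 h3
  refine ⟨l, rfl, hb, fun b => ?_⟩
  have d0 := count_child_zero b l
  have d1 := count_child_succ b l (i := 0) (by norm_num)
  have d2 := count_child_succ b l (i := 1) (by norm_num)
  have d3 := count_child_succ b l (i := 2) (by norm_num)
  simp only [zero_add, Nat.reduceAdd] at d1 d2 d3
  cases b
  · apply hn _ (hc false) <;> simp only [Bool.not_false] at d1 d2 d3 <;> omega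
  · apply hy _ (hc true) <;> simp only [Bool.not_true] at d1 d2 d3 <;> omega

/-! ### The end game: at most one element below level `3` -/

theorem BitsOK.true_false (m n : ℕ) (b : Bool) :
    BitsOK (b :: (List.replicate m true ++ List.replicate n false)) := by
  have h : blocksB [b, true, false] (alt true) = true ∨
      blocksB [b, true, false] (alt false) = true := by cases b <;> decide
  have key : b :: (List.replicate m true ++ List.replicate n false)
      = expand [(1, b), (m, true), (n, false)] := by simp [expand]
  rw [key]
  rcases h with h | h
  · exact ⟨true, Blocks.expand (Blocks.of_blocksB h)⟩
  · exact ⟨false, Blocks.expand (Blocks.of_blocksB h)⟩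

theorem win_nil (r : ℕ) : Win r [] := by
  induction r with
  | zero => simp [Win]
  | succ r ih => exact ⟨[], rfl, ⟨true, Blocks.of_blocksB (by decide)⟩, fun b => by cases b <;> exact ih⟩

/-- With a single element below level `3` (or none, when `i = 3`) the volume bound suffices. -/
theorem win_low (r i n : ℕ) (hi : i ≤ 3) (h : binSum r (3 - i) + n ≤ 2 ^ r) :
    Win r (i :: List.replicate n 3) := by
  induction r generalizing i n with
  | zero =>
    rw [binSum_zero_left] at h
    have : n = 0 := by simpa using h
    simp [Win, this]
  | succ r ih =>
    have hp : 2 ^ (r + 1) = 2 * 2 ^ r := by ring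
    have hB := binSum_le_two_pow r (3 - i)
    -- as many elements on level `3` as the volume after a positive answer allows
    obtain ⟨k, m, rfl, hk, hkm⟩ : ∃ k m, n = k + m ∧ binSum r (3 - i) + k ≤ 2 ^ r ∧
        (m = 0 ∨ binSum r (3 - i) + k = 2 ^ r) :=
      ⟨min n (2 ^ r - binSum r (3 - i)), n - min n (2 ^ r - binSum r (3 - i)),
        by omega, by omega, by omega⟩
    refine ⟨(i, true) :: (List.replicate k (3, true) ++ List.replicate m (3, false)), ?_, ?_, ?_⟩
    · simp
    · simpa using BitsOK.true_false k m true
    · intro b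
      cases b with
      | true =>
        have : child true ((i, true) :: (List.replicate k (3, true) ++ List.replicate m (3, false)))
            = i :: List.replicate k 3 := by
          simp [child, fate]
        rw [this]
        exact ih i k hi hk
      | false =>
        rcases Nat.lt_or_ge i 3 with hi3 | hi3
        · have : child false
              ((i, true) :: (List.replicate k (3, true) ++ List.replicate m (3, false)))
              = (i + 1) :: List.replicate m 3 := by
            simp [child, fate, hi3]
          rw [this]
          apply ih (i + 1) m hi3
          obtain ⟨e, he⟩ : ∃ e, 3 - i = e + 1 := ⟨2 - i, by omega⟩
          rw [he, binSum_succ] at h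
          rw [he] at hk hkm hB
          have := binSum_le_two_pow r e
          rw [show 3 - (i + 1) = e by omega]
          omega
        · have hi : i = 3 := by omega
          subst hi
          have : child false
              ((3, true) :: (List.replicate k (3, true) ++ List.replicate m (3, false)))
              = List.replicate m 3 := by
            simp [child, fate]
          rw [this]
          cases m with
          | zero => exact win_nil r
          | succ m =>
            apply ih 3 m le_rfl
            simp only [Nat.sub_self, binSum_zero] at h hk hkm ⊢
            omega

theorem eq_replicate_of_count {w : List ℕ} (hw : ∀ x ∈ w, x < 4)
    (h : w.count 0 = 0 ∧ w.count 1 = 0 ∧ w.count 2 = 0) : w = List.replicate (w.count 3) 3 := by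
  have h3 : ∀ x ∈ w, x = 3 := by
    intro x hx
    have h4 := hw x hx
    have h5 := List.count_pos_iff.2 hx
    by_contra h6
    interval_cases x <;> omega
  have h7 : w.count 3 = w.length := List.count_eq_length.2 fun b hb => (h3 b hb).symm
  rw [h7]
  exact List.eq_replicate_iff.2 ⟨rfl, h3⟩

theorem typeWin_low {r t₀ t₁ t₂ t₃ : ℕ} (h : t₀ + t₁ + t₂ ≤ 1) (hv : tvol r t₀ t₁ t₂ t₃ ≤ 2 ^ r) :
    TypeWin r t₀ t₁ t₂ t₃ := by
  intro w hw h0 h1 h2 h3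
  have hlt := hw.lt_four
  have key : ∀ i < 3, i ∈ w → w ~r i :: List.replicate (w.count 3) 3 := by
    intro i hi hiw
    obtain ⟨u, v, rfl⟩ := List.append_of_mem hiw
    have e : u ++ i :: v ~r i :: (v ++ u) := by
      simpa using List.isRotated_append (l := u) (l' := i :: v)
    have hr : v ++ u = List.replicate ((v ++ u).count 3) 3 := by
      apply eq_replicate_of_count
      · intro x hx
        apply hlt
        simp only [List.mem_append, List.mem_cons] at hx ⊢
        tauto
      · simp only [List.count_append, List.count_cons] at h0 h1 h2 ⊢
        interval_cases i <;> simp at h0 h1 h2 <;> omega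
    have hc : (u ++ i :: v).count 3 = (v ++ u).count 3 := by
      simp only [List.count_append, List.count_cons]
      have : i ≠ 3 := by omega
      simp [this]
      omega
    rw [hc, ← hr]
    exact e
  simp only [tvol] at hv
  by_cases c0 : t₀ = 1
  · have := key 0 (by norm_num) (List.count_pos_iff.1 (by omega))
    refine Win.rotate (win_low r 0 _ (by norm_num) ?_) this.symm
    obtain ⟨rfl, rfl⟩ : t₁ = 0 ∧ t₂ = 0 := by omega
    simpa [c0, h3] using hv
  by_cases c1 : t₁ = 1
  · have := key 1 (by norm_num) (List.count_pos_iff.1 (by omega))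
    refine Win.rotate (win_low r 1 _ (by norm_num) ?_) this.symm
    obtain ⟨rfl, rfl⟩ : t₀ = 0 ∧ t₂ = 0 := by omega
    simpa [c1, h3] using hv
  by_cases c2 : t₂ = 1
  · have := key 2 (by norm_num) (List.count_pos_iff.1 (by omega))
    refine Win.rotate (win_low r 2 _ (by norm_num) ?_) this.symm
    obtain ⟨rfl, rfl⟩ : t₀ = 0 ∧ t₁ = 0 := by omega
    simpa [c2, h3] using hv
  obtain ⟨rfl, rfl, rfl⟩ : t₀ = 0 ∧ t₁ = 0 ∧ t₂ = 0 := by omega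
  rw [eq_replicate_of_count hlt ⟨h0, h1, h2⟩, h3]
  cases t₃ with
  | zero => exact win_nil r
  | succ n =>
    refine win_low r 3 n le_rfl ?_
    simp only [Nat.sub_self, binSum_zero]
    simp only [zero_mul, zero_add] at hv
    omega

/-! ### The middle game: halving with bounded discrepancy -/

/-- The elements on level `3` are used as counterweights: they can be distributed so that both
answers have volume at most `2 ^ r`. -/
theorem exists_balance {r a₀ a₁ a₂ b₀ b₁ b₂ t₃ : ℕ}
    (h₀ : a₀ ≤ b₀ + 1 ∧ b₀ ≤ a₀ + 1) (h₁ : a₁ ≤ b₁ + 1 ∧ b₁ ≤ a₁ + 1)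
    (h₂ : a₂ ≤ b₂ + 1 ∧ b₂ ≤ a₂ + 1) (ht : binSum r 3 ≤ t₃)
    (hv : tvol (r + 1) (a₀ + b₀) (a₁ + b₁) (a₂ + b₂) t₃ ≤ 2 ^ (r + 1)) :
    ∃ a₃ b₃, t₃ = a₃ + b₃ ∧ t₃ ≤ 2 * a₃ + binSum r 3 ∧ t₃ ≤ 2 * b₃ + binSum r 3 ∧
      tvol r a₀ (a₁ + b₀) (a₂ + b₁) (a₃ + b₂) ≤ 2 ^ r ∧
      tvol r b₀ (b₁ + a₀) (b₂ + a₁) (b₃ + a₂) ≤ 2 ^ r := by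
  have hz := binSum_zero r
  have m1 := binSum_mono r 0
  have m2 := binSum_mono r 1
  have m3 := binSum_mono r 2
  simp only [zero_add, Nat.reduceAdd] at m1 m2 m3
  have bound : ∀ (a b : ℕ) (c : ℤ), a ≤ b + 1 ∧ b ≤ a + 1 → 0 ≤ c →
      -c ≤ ((a : ℤ) - b) * c ∧ ((a : ℤ) - b) * c ≤ c := by
    rintro a b c ⟨hab, hba⟩ hc
    have hab' : (a : ℤ) - b ≤ 1 := by omega
    have hba' : -1 ≤ (a : ℤ) - b := by omega
    constructor <;> nlinarith
  obtain ⟨p1, p2⟩ := bound a₀ b₀ ((binSum r 3 : ℤ) - binSum r 2) h₀ (by omega)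
  obtain ⟨q1, q2⟩ := bound a₁ b₁ ((binSum r 2 : ℤ) - binSum r 1) h₁ (by omega)
  obtain ⟨s1, s2⟩ := bound a₂ b₂ ((binSum r 1 : ℤ) - binSum r 0) h₂ (by omega)
  have diff : ∀ a₃ b₃ : ℕ, (tvol r a₀ (a₁ + b₀) (a₂ + b₁) (a₃ + b₂) : ℤ)
      - tvol r b₀ (b₁ + a₀) (b₂ + a₁) (b₃ + a₂)
      = ((a₀ : ℤ) - b₀) * (binSum r 3 - binSum r 2) + ((a₁ : ℤ) - b₁) * (binSum r 2 - binSum r 1)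
        + ((a₂ : ℤ) - b₂) * (binSum r 1 - binSum r 0) + (a₃ - b₃) := by
    intro a₃ b₃
    simp only [tvol, hz]
    push_cast
    ring
  generalize ((a₀ : ℤ) - b₀) * (binSum r 3 - binSum r 2) = X at *
  generalize ((a₁ : ℤ) - b₁) * (binSum r 2 - binSum r 1) = Y at *
  generalize ((a₂ : ℤ) - b₂) * (binSum r 1 - binSum r 0) = Z at *
  -- `X + Y + Z` is the discrepancy caused by the three lower levels
  obtain ⟨a₃, b₃, rfl, hd1, hd2⟩ : ∃ a₃ b₃ : ℕ, t₃ = a₃ + b₃ ∧ 0 ≤ X + Y + Z + (a₃ - b₃) ∧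
      X + Y + Z + (a₃ - b₃) ≤ 1 := by
    refine ⟨((t₃ - (X + Y + Z) + 1) / 2).toNat, t₃ - ((t₃ - (X + Y + Z) + 1) / 2).toNat, ?_, ?_, ?_⟩
      <;> omega
  have hsum := tvol_succ r a₀ a₁ a₂ a₃ b₀ b₁ b₂ b₃
  have hdiff := diff a₃ b₃
  rw [hsum, pow_succ] at hv
  exact ⟨a₃, b₃, rfl, by omega, by omega, by omega, by omega⟩

theorem TypeWin.halve {r K D a₀ a₁ a₂ b₀ b₁ b₂ t₃ : ℕ}
    (h₀ : a₀ ≤ b₀ + 1 ∧ b₀ ≤ a₀ + 1) (h₁ : a₁ ≤ b₁ + 1 ∧ b₁ ≤ a₁ + 1)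
    (h₂ : a₂ ≤ b₂ + 1 ∧ b₂ ≤ a₂ + 1) (hD : binSum r 3 ≤ D) (ht : 2 ^ (K + 1) * (2 * D) ≤ t₃ + D)
    (hv : tvol (r + 1) (a₀ + b₀) (a₁ + b₁) (a₂ + b₂) t₃ ≤ 2 ^ (r + 1))
    (hy : ∀ s, 2 ^ K * (2 * D) ≤ s + D → tvol r a₀ (a₁ + b₀) (a₂ + b₁) s ≤ 2 ^ r →
      TypeWin r a₀ (a₁ + b₀) (a₂ + b₁) s)
    (hn : ∀ s, 2 ^ K * (2 * D) ≤ s + D → tvol r b₀ (b₁ + a₀) (b₂ + a₁) s ≤ 2 ^ r →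
      TypeWin r b₀ (b₁ + a₀) (b₂ + a₁) s) :
    TypeWin (r + 1) (a₀ + b₀) (a₁ + b₁) (a₂ + b₂) t₃ := by
  have hK : 2 ^ (K + 1) * (2 * D) = 2 * (2 ^ K * (2 * D)) := by ring
  have hK1 : 2 * D ≤ 2 ^ K * (2 * D) := Nat.le_mul_of_pos_left _ (by positivity)
  rw [hK] at ht
  obtain ⟨a₃, b₃, rfl, ha, hb, vy, vn⟩ := exists_balance h₀ h₁ h₂ (by omega) hv
  exact TypeWin.step h₂.1 h₂.2 (hy _ (by omega) vy) (hn _ (by omega) vn)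

/-- The second part of the middle game, when levels `0` and `1` contain at most one element. -/
theorem typeWin_late (D K : ℕ) : ∀ r t₀ t₁ t₂ t₃ : ℕ, K ≤ r → binSum r 3 ≤ D →
    2 ^ K * (2 * D) ≤ t₃ + D → tvol r t₀ t₁ t₂ t₃ ≤ 2 ^ r →
    (t₀ = 1 ∧ t₁ = 0 ∧ 4 * t₂ < 2 ^ K ∨ t₀ = 0 ∧ t₁ = 1 ∧ 2 * t₂ < 2 ^ K ∨
      t₀ = 0 ∧ t₁ = 0 ∧ t₂ ≤ 2 ^ K) → TypeWin r t₀ t₁ t₂ t₃ := by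
  induction K with
  | zero =>
    intro r t₀ t₁ t₂ t₃ _ _ _ hv h
    exact typeWin_low (by omega) hv
  | succ K ih =>
    intro r t₀ t₁ t₂ t₃ hr hD ht hv h
    obtain ⟨r, rfl⟩ : ∃ s, r = s + 1 := ⟨r - 1, by omega⟩
    have hD' : binSum r 3 ≤ D := (binSum_mono_left 3 (Nat.le_succ r)).trans hD
    have hp : 2 ^ (K + 1) = 2 * 2 ^ K := by ring
    have e2 : t₂ = t₂ / 2 + (t₂ + 1) / 2 := by omega
    -- the lowest element is put inside the question, and level `2` is halved
    rcases h with ⟨rfl, rfl, h⟩ | ⟨rfl, rfl, h⟩ | ⟨rfl, rfl, h⟩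
    · rw [e2] at hv ⊢
      refine TypeWin.halve (a₀ := 1) (b₀ := 0) (a₁ := 0) (b₁ := 0) (K := K) (D := D)
        (by omega) (by omega) (by omega) hD' ht hv ?_ ?_
      · exact fun s hs hv => ih _ _ _ _ _ (by omega) hD' hs hv (by omega)
      · exact fun s hs hv => ih _ _ _ _ _ (by omega) hD' hs hv (by omega)
    · rw [e2] at hv ⊢
      refine TypeWin.halve (a₀ := 0) (b₀ := 0) (a₁ := 1) (b₁ := 0) (K := K) (D := D)
        (by omega) (by omega) (by omega) hD' ht hv ?_ ?_
      · exact fun s hs hv => ih _ _ _ _ _ (by omega) hD' hs hv (by omega)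
      · exact fun s hs hv => ih _ _ _ _ _ (by omega) hD' hs hv (by omega)
    · rw [e2] at hv ⊢
      refine TypeWin.halve (a₀ := 0) (b₀ := 0) (a₁ := 0) (b₁ := 0) (K := K) (D := D)
        (by omega) (by omega) (by omega) hD' ht hv ?_ ?_
      · exact fun s hs hv => ih _ _ _ _ _ (by omega) hD' hs hv (by omega)
      · exact fun s hs hv => ih _ _ _ _ _ (by omega) hD' hs hv (by omega)

/-- The first part of the middle game, during which level `1` shrinks to at most one element and
level `2` to at most `Z` elements. -/
theorem typeWin_early (D Z L : ℕ) (hL : 4 * Z < 2 ^ L) (J : ℕ) : ∀ r t₀ t₁ t₂ t₃ : ℕ,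
    J + L ≤ r → binSum r 3 ≤ D → 2 ^ (J + L) * (2 * D) ≤ t₃ + D → tvol r t₀ t₁ t₂ t₃ ≤ 2 ^ r →
    t₂ + J * 2 ^ J ≤ Z * 2 ^ J →
    (t₀ = 1 ∧ 2 * t₁ < 2 ^ J ∨ t₀ = 0 ∧ t₁ ≤ 2 ^ J) → TypeWin r t₀ t₁ t₂ t₃ := by
  induction J with
  | zero =>
    intro r t₀ t₁ t₂ t₃ hr hD ht hv h2 h
    exact typeWin_late D L r t₀ t₁ t₂ t₃ (by omega) hD (by simpa using ht) hv (by omega)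
  | succ J ih =>
    intro r t₀ t₁ t₂ t₃ hr hD ht hv h2 h
    obtain ⟨r, rfl⟩ : ∃ s, r = s + 1 := ⟨r - 1, by omega⟩
    have hD' : binSum r 3 ≤ D := (binSum_mono_left 3 (Nat.le_succ r)).trans hD
    have hp : 2 ^ (J + 1) = 2 * 2 ^ J := by ring
    have e2 : t₂ = t₂ / 2 + (t₂ + 1) / 2 := by omega
    have h2' : t₂ + 2 * (J * 2 ^ J) + 2 * 2 ^ J ≤ 2 * (Z * 2 ^ J) := by
      calc _ = t₂ + (J + 1) * 2 ^ (J + 1) := by ring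
        _ ≤ Z * 2 ^ (J + 1) := h2
        _ = _ := by ring
    rw [show J + 1 + L = (J + L) + 1 by ring] at ht
    rcases h with ⟨rfl, h⟩ | ⟨rfl, h⟩
    · have e1 : t₁ = t₁ / 2 + (t₁ + 1) / 2 := by omega
      rw [e1, e2] at hv ⊢
      refine TypeWin.halve (a₀ := 1) (b₀ := 0) (K := J + L) (D := D)
        (by omega) (by omega) (by omega) hD' ht hv ?_ ?_
      · exact fun s hs hv => ih _ _ _ _ _ (by omega) hD' hs hv (by omega) (by omega)
      · exact fun s hs hv => ih _ _ _ _ _ (by omega) hD' hs hv (by omega) (by omega)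
    · have e1 : t₁ = (t₁ + 1) / 2 + t₁ / 2 := by omega
      rw [e1, e2] at hv ⊢
      refine TypeWin.halve (a₀ := 0) (b₀ := 0) (K := J + L) (D := D)
        (by omega) (by omega) (by omega) hD' ht hv ?_ ?_
      · exact fun s hs hv => ih _ _ _ _ _ (by omega) hD' hs hv (by omega) (by omega)
      · exact fun s hs hv => ih _ _ _ _ _ (by omega) hD' hs hv (by omega) (by omega)

/-! ### The opening: exact halving -/

theorem typeWin_opening (k : ℕ) : ∀ j r : ℕ,
    TypeWin r ((j + k).choose 0) ((j + k).choose 1) ((j + k).choose 2) ((j + k).choose 3) →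
    TypeWin (r + k) (2 ^ k * j.choose 0) (2 ^ k * j.choose 1) (2 ^ k * j.choose 2)
      (2 ^ k * j.choose 3) := by
  induction k with
  | zero => intro j r h; simpa using h
  | succ k ih =>
    intro j r h
    have h' := ih (j + 1) r (by rwa [show j + 1 + k = j + (k + 1) by ring])
    have e : ∀ i, 2 ^ (k + 1) * j.choose i = 2 ^ k * j.choose i + 2 ^ k * j.choose i :=
      fun i => by ring
    have e0 : 2 ^ k * (j + 1).choose 0 = 2 ^ k * j.choose 0 := by simp
    have e1 : ∀ i, 2 ^ k * (j + 1).choose (i + 1) = 2 ^ k * j.choose (i + 1) + 2 ^ k * j.choose i :=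
      fun i => by rw [Nat.choose_succ_succ]; ring
    rw [e0, e1 0, e1 1, e1 2] at h'
    rw [e, e, e, e]
    exact TypeWin.step (by omega) (by omega) h' h'

theorem tvol_choose (j r : ℕ) :
    tvol r (j.choose 0) (j.choose 1) (j.choose 2) (j.choose 3) = binSum (r + j) 3 := by
  induction j generalizing r with
  | zero => simp [tvol]
  | succ j ih =>
    rw [show r + (j + 1) = r + 1 + j by ring, ← ih]
    simp only [tvol, binSum_succ, binSum_zero, Nat.choose_succ_succ j, Nat.choose_zero_right,
      zero_add, Nat.reduceAdd, Nat.succ_eq_add_one]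
    ring

/-! ### Estimates for large `m` -/

theorem binSum_le_pow (n e : ℕ) : binSum n e ≤ (n + 1) ^ e := by
  induction n generalizing e with
  | zero => simp [binSum_zero_left]
  | succ n ih =>
    cases e with
    | zero => simp [binSum_zero]
    | succ e =>
      rw [binSum_succ]
      calc _ ≤ (n + 1) ^ (e + 1) + (n + 1) ^ e := Nat.add_le_add (ih _) (ih _)
        _ = (n + 1) ^ e * (n + 2) := by ring
        _ ≤ (n + 2) ^ e * (n + 2) := by gcongr; omega
        _ = _ := by ring

theorem poly_le_two_pow {L : ℕ} (h : 40 ≤ L) : 2 ^ 13 * (3 * L + 7) ^ 3 ≤ 2 ^ L := by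
  induction L, h using Nat.le_induction with
  | base => norm_num
  | succ L h ih =>
    have : (3 * (L + 1) + 7) ^ 3 ≤ 2 * (3 * L + 7) ^ 3 := by
      obtain ⟨k, rfl⟩ := Nat.exists_eq_add_of_le h
      ring_nf
      nlinarith [sq_nonneg k, Nat.zero_le (k ^ 3)]
    rw [pow_succ 2 L]
    nlinarith

/-- After the `m` rounds of the opening the remaining rounds suffice. -/
theorem typeWin_after_opening {m : ℕ} (hm : 2 ^ 40 ≤ m) :
    m ≤ Nmin m ∧ TypeWin (Nmin m - m) (m.choose 0) (m.choose 1) (m.choose 2) (m.choose 3) := by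
  obtain ⟨L, hL, hLm, hmL⟩ : ∃ L, 40 ≤ L ∧ 2 ^ L ≤ m ∧ m < 2 ^ (L + 1) := by
    have hm0 : m ≠ 0 := by have := Nat.pos_of_neZero (2 ^ 40); omega
    exact ⟨Nat.log 2 m, (Nat.le_log_iff_pow_le (by norm_num) hm0).2 hm,
      Nat.pow_log_le_self 2 hm0, Nat.lt_pow_succ_log_self (by norm_num) m⟩
  have hpoly := poly_le_two_pow hL
  have hbig : 2 ^ 13 * (3 * L + 7) ≤ 2 ^ L := by
    refine le_trans ?_ hpoly
    gcongr
    exact Nat.le_self_pow (by norm_num) _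
  have hL1 : 2 ^ (L + 1) = 2 * 2 ^ L := by ring
  have hL2 : 2 ^ (L + 2) = 4 * 2 ^ L := by ring
  -- `m + (3 L + 6)` questions meet the volume bound
  have hmem : m + (3 * L + 6) ∈ {q | 2 ^ m * binSum q 3 ≤ 2 ^ q} := by
    have h1 : binSum (m + (3 * L + 6)) 3 ≤ 2 ^ (3 * L + 6) :=
      calc _ ≤ (m + (3 * L + 6) + 1) ^ 3 := binSum_le_pow _ _
        _ ≤ (2 ^ (L + 2)) ^ 3 := Nat.pow_le_pow_left (by omega) 3
        _ = _ := by ring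
    rw [Set.mem_ofPred_eq, pow_add]
    exact Nat.mul_le_mul_left _ h1
  have hN : 2 ^ m * binSum (Nmin m) 3 ≤ 2 ^ Nmin m := Nat.sInf_mem ⟨_, hmem⟩
  have hNle : Nmin m ≤ m + (3 * L + 6) := Nat.sInf_le hmem
  have hmN : m ≤ Nmin m := by
    have h1 : 1 ≤ binSum (Nmin m) 3 := by
      have := binSum_mono_left 3 (Nat.zero_le (Nmin m))
      rwa [binSum_zero_left] at this
    exact (Nat.pow_le_pow_iff_right (by norm_num : 1 < 2)).1
      ((Nat.le_mul_of_pos_right _ h1).trans hN)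
  refine ⟨hmN, ?_⟩
  obtain ⟨r, hr⟩ : ∃ r, Nmin m = r + m := ⟨Nmin m - m, by omega⟩
  rw [hr] at hN hNle ⊢
  rw [Nat.add_sub_cancel]
  have hv : tvol r (m.choose 0) (m.choose 1) (m.choose 2) (m.choose 3) ≤ 2 ^ r := by
    rw [tvol_choose]
    rw [pow_add, mul_comm (2 ^ r)] at hN
    exact Nat.le_of_mul_le_mul_left hN (by positivity)
  have hD : binSum r 3 ≤ (3 * L + 7) ^ 3 :=
    (binSum_le_pow r 3).trans (Nat.pow_le_pow_left (by omega) 3)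
  -- level `3` contains a constant proportion of `m ^ 3` elements
  have hC3 : 2 ^ (3 * L) ≤ 64 * m.choose 3 := by
    have h1 := Nat.pow_sub_le_descFactorial m 3
    rw [Nat.descFactorial_eq_factorial_mul_choose] at h1
    obtain ⟨n, hn⟩ : ∃ n, 2 ^ L = 2 * n := ⟨2 ^ (L - 1), by rw [← pow_succ']; congr 1; omega⟩
    have h2 : n ^ 3 ≤ (m + 1 - 3) ^ 3 := Nat.pow_le_pow_left (by omega) 3
    have h3 : 2 ^ (3 * L) = 8 * n ^ 3 := by rw [mul_comm, pow_mul, hn]; ring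
    have h4 : Nat.factorial 3 = 6 := rfl
    rw [h4] at h1
    omega
  have hT : 2 ^ (L + 2 + (L + 3)) * (2 * (3 * L + 7) ^ 3) ≤ m.choose 3 := by
    have h1 : 64 * (2 ^ (L + 2 + (L + 3)) * (2 * (3 * L + 7) ^ 3))
        = 2 ^ (2 * L) * (2 ^ 12 * (3 * L + 7) ^ 3) := by ring
    have h2 : 2 ^ (2 * L) * (2 ^ 12 * (3 * L + 7) ^ 3) ≤ 2 ^ (2 * L) * 2 ^ L :=
      Nat.mul_le_mul_left _ (by omega)
    have h3 : 2 ^ (2 * L) * 2 ^ L = 2 ^ (3 * L) := by rw [← pow_add]; congr 1; ring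
    omega
  have hpos : 0 < (3 * L + 7) ^ 3 := by positivity
  -- the volume bound itself forces `r` to be long enough for the middle game
  have hrK : L + 2 + (L + 3) ≤ r := by
    have h1 : m.choose 3 ≤ 2 ^ r := le_trans (by simp [tvol]) hv
    have h2 : 2 ^ (L + 2 + (L + 3)) ≤ 2 ^ r :=
      (Nat.le_mul_of_pos_right _ (by omega)).trans (hT.trans h1)
    exact (Nat.pow_le_pow_iff_right (by norm_num : 1 < 2)).1 h2
  refine typeWin_early ((3 * L + 7) ^ 3) m (L + 3) ?_ (L + 2) r _ _ _ _ hrK hD (by omega) hv ?_ ?_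
  · rw [show L + 3 = (L + 1) + 2 by ring, pow_add]
    omega
  · have h1 : m.choose 2 ≤ m * m := by
      rw [← pow_two]; exact Nat.choose_le_pow m 2
    have h2 : m * m + (L + 2) * 2 ^ (L + 2) ≤ m * 2 ^ (L + 2) := by
      have h3 : m * m ≤ m * (2 ^ (L + 1)) := Nat.mul_le_mul_left _ (by omega)
      have h4 : (L + 2) * 2 ^ (L + 2) ≤ m * 2 ^ (L + 1) := by
        rw [show 2 ^ (L + 2) = 2 * 2 ^ (L + 1) by ring, ← mul_assoc]
        exact Nat.mul_le_mul_right _ (by omega)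
      have h5 : m * 2 ^ (L + 2) = m * 2 ^ (L + 1) + m * 2 ^ (L + 1) := by ring
      omega
    omega
  · left
    simp only [Nat.choose_zero_right, Nat.choose_one_right, true_and]
    omega

/-! ### From words to the game -/

variable {u : ℕ}

theorem exists_intervals (p : List (ℕ × Bool)) : ∀ xs : List (Fin u), xs.Pairwise (· < ·) →
    xs.length = (expand p).length →
    ∃ I : List (Set (Fin u)), I.length = (p.map Prod.snd).count true ∧
      (∀ J ∈ I, IsInterval J) ∧ (∀ J ∈ I, ∀ z ∈ J, ∃ x ∈ xs, x ≤ z) ∧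
      xs.map (fun x => decide (∃ J ∈ I, x ∈ J)) = expand p := by
  induction p with
  | nil =>
    intro xs _ hl
    have : xs = [] := by simpa [expand] using hl
    subst this
    exact ⟨[], rfl, by simp, by simp, by simp [expand]⟩
  | cons a p ih =>
    obtain ⟨n, c⟩ := a
    intro xs hs hl
    simp only [expand, List.length_append, List.length_replicate] at hl
    obtain ⟨ys, zs, rfl, hy⟩ : ∃ ys zs, xs = ys ++ zs ∧ ys.length = n :=
      ⟨xs.take n, xs.drop n, (List.take_append_drop n xs).symm, by simp; omega⟩
    rw [List.pairwise_append] at hs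
    obtain ⟨hys, hzs, hyz⟩ := hs
    obtain ⟨I, hI, hIint, hlow, hmap⟩ := ih zs hzs (by simp at hl; omega)
    have hout : ∀ y ∈ ys, ¬ ∃ J ∈ I, y ∈ J := by
      rintro y hy ⟨J, hJ, hyJ⟩
      obtain ⟨x, hx, hxy⟩ := hlow J hJ y hyJ
      exact absurd (hyz y hy x hx) (not_lt.2 hxy)
    cases c with
    | false =>
      refine ⟨I, by simpa using hI, hIint, ?_, ?_⟩
      · intro J hJ z hz
        obtain ⟨x, hx, hxz⟩ := hlow J hJ z hz
        exact ⟨x, List.mem_append_right _ hx, hxz⟩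
      · rw [List.map_append, hmap, expand]
        congr 1
        rw [List.eq_replicate_iff]
        refine ⟨by simpa using hy, ?_⟩
        intro b hb
        obtain ⟨y, hy, rfl⟩ := List.mem_map.1 hb
        simpa using hout y hy
    | true =>
      -- the interval spanned by the first run of elements of the question
      obtain ⟨J₀, hJ₀, hin, hlo, hhi⟩ : ∃ J₀ : Set (Fin u), IsInterval J₀ ∧ (∀ y ∈ ys, y ∈ J₀) ∧
          (∀ z ∈ J₀, ∃ y ∈ ys, y ≤ z) ∧ (∀ z ∈ J₀, ∃ y ∈ ys, z ≤ y) := by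
        rcases ys.eq_nil_or_concat with rfl | hne
        · exact ⟨∅, Or.inl rfl, by simp, by simp, by simp⟩
        · have hne : ys ≠ [] := by
            obtain ⟨_, _, rfl⟩ := hne
            simp
          refine ⟨Set.Icc (ys.head hne) (ys.getLast hne), Or.inr ⟨_, _, rfl⟩, ?_, ?_, ?_⟩
          · have hle : ys.Pairwise (· ≤ ·) := hys.imp fun h => h.le
            exact fun y hy => ⟨hle.rel_head hy, hle.rel_getLast hy⟩
          · exact fun z hz => ⟨_, List.head_mem hne, hz.1⟩
          · exact fun z hz => ⟨_, List.getLast_mem hne, hz.2⟩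
      refine ⟨J₀ :: I, by simp [hI], ?_, ?_, ?_⟩
      · intro J hJ
        rcases List.mem_cons.1 hJ with rfl | hJ
        · exact hJ₀
        · exact hIint J hJ
      · intro J hJ z hz
        rcases List.mem_cons.1 hJ with rfl | hJ
        · obtain ⟨x, hx, hxz⟩ := hlo z hz
          exact ⟨x, List.mem_append_left _ hx, hxz⟩
        · obtain ⟨x, hx, hxz⟩ := hlow J hJ z hz
          exact ⟨x, List.mem_append_right _ hx, hxz⟩
      · rw [List.map_append, expand, ← hmap]
        congr 1
        · rw [List.eq_replicate_iff]
          refine ⟨by simpa using hy, ?_⟩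
          intro b hb
          obtain ⟨y, hy, rfl⟩ := List.mem_map.1 hb
          simpa using Or.inl (hin y hy)
        · apply List.map_congr_left
          intro z hz
          have : z ∉ J₀ := by
            intro hzJ
            obtain ⟨y, hy, hzy⟩ := hhi z hzJ
            exact absurd (hyz y hy z hz) (not_lt.2 hzy)
          simp [this]

/-- A bit pattern satisfying `BitsOK` is cut out of an increasing list by a four-interval question,
up to exchanging the two answers. -/
theorem exists_question {xs : List (Fin u)} (hs : xs.Pairwise (· < ·)) {bits : List Bool}
    (hl : xs.length = bits.length) (hb : BitsOK bits) :
    ∃ (Q : Set (Fin u)) (s : Bool), IsKIntervalQuestion 4 Q ∧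
      xs.map (fun x => decide (x ∈ Q) == s) = bits := by
  have key : ∀ bits : List Bool, xs.length = bits.length → Blocks bits (alt false) →
      ∃ Q : Set (Fin u), IsKIntervalQuestion 4 Q ∧ xs.map (fun x => decide (x ∈ Q)) = bits := by
    intro bits hl hb
    obtain ⟨p, hp, rfl⟩ := hb.exists_expand
    obtain ⟨I, hI, hIint, -, hmap⟩ := exists_intervals p xs hs hl
    rw [hp] at hI
    have hI : I.length = 4 := by rw [hI]; decide
    refine ⟨⋃ t : Fin 4, I.get (t.cast hI.symm), ⟨fun t => I.get (t.cast hI.symm),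
      fun t => hIint _ (List.get_mem _ _), rfl⟩, ?_⟩
    rw [← hmap]
    apply List.map_congr_left
    intro x _
    congr 1
    rw [Set.mem_iUnion, eq_iff_iff]
    constructor
    · rintro ⟨t, ht⟩
      exact ⟨_, List.get_mem _ _, ht⟩
    · rintro ⟨J, hJ, hx⟩
      obtain ⟨t, rfl⟩ := List.get_of_mem hJ
      exact ⟨t.cast hI, hx⟩
  obtain ⟨b, hb⟩ := hb
  cases b with
  | false =>
    obtain ⟨Q, hQ, hm⟩ := key bits hl hb
    exact ⟨Q, true, hQ, by simpa using hm⟩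
  | true =>
    obtain ⟨Q, hQ, hm⟩ := key (bits.map Bool.not) (by simpa using hl) (by
      have := hb.map Bool.not
      rwa [alt_not] at this)
    refine ⟨Q, false, hQ, ?_⟩
    have := congrArg (List.map Bool.not) hm
    simpa [Function.comp_def] using this

/-- The elements of the support in increasing order. -/
def suppList (σ : State u) : List (Fin u) :=
  (List.finRange u).filter fun y => decide ((σ y : ℕ) ≤ 3)

/-- The word of levels of the support of a state, in increasing order of the elements. -/
def word (σ : State u) : List ℕ := (suppList σ).map fun y => (σ y : ℕ)

theorem suppList_pairwise (σ : State u) : (suppList σ).Pairwise (· < ·) :=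
  (List.pairwise_lt_finRange u).filter _

theorem isFinal_of_word {σ : State u} (h : (word σ).length ≤ 1) : IsFinal σ := by
  intro x hx y hy
  have mem : ∀ z ∈ support σ, z ∈ suppList σ := by
    intro z hz
    simpa [suppList, support] using hz
  rw [word, List.length_map] at h
  match hl : suppList σ, h with
  | [], _ => simpa [hl] using mem x hx
  | [z], _ =>
    have hx := mem x hx
    have hy := mem y hy
    rw [hl, List.mem_singleton] at hx hy
    rw [hx, hy]

theorem word_ansState (σ : State u) (Q : Set (Fin u)) (s b : Bool) :
    word (ansState σ Q b) =
      child (if s then b else !b)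
        ((suppList σ).map fun x => ((σ x : ℕ), decide (x ∈ Q) == s)) := by
  simp only [child, word, suppList, List.filterMap_map]
  rw [← List.filterMap_eq_map, List.filterMap_filter, List.filterMap_filter]
  congr 1
  funext y
  have h4 : (σ y : ℕ) < 5 := (σ y).2
  obtain hn | hn | hn | hn | hn : (σ y : ℕ) = 0 ∨ (σ y : ℕ) = 1 ∨ (σ y : ℕ) = 2 ∨ (σ y : ℕ) = 3 ∨
      (σ y : ℕ) = 4 := by omega
  all_goals
    by_cases hy : y ∈ Q <;> cases b <;> cases s <;>
      simp [ansState, yesState, noState, fate, hy, hn]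

/-- Winning on words yields a winning strategy of four-interval questions. -/
theorem exists_strategy (q : ℕ) : ∀ σ : State u, Win q (word σ) →
    ∃ S : Strategy u, IsWinning σ S q ∧ UsesKIntervals S q 4 := by
  induction q with
  | zero =>
    intro σ h
    refine ⟨fun _ => ∅, ?_, fun bs hbs => absurd hbs (Nat.not_lt_zero _)⟩
    intro bs hbs
    rw [List.length_eq_zero_iff.1 hbs]
    exact isFinal_of_word h
  | succ q ih =>
    intro σ h
    obtain ⟨l, hl, hb, hc⟩ := h
    have hlen : (suppList σ).length = (l.map Prod.snd).length := by
      have := congrArg List.length hl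
      simpa [word] using this.symm
    obtain ⟨Q, s, hQ, hm⟩ := exists_question (suppList_pairwise σ) hlen hb
    have hl' : l = (suppList σ).map fun x => ((σ x : ℕ), decide (x ∈ Q) == s) := by
      have e1 : l = (l.map Prod.fst).zip (l.map Prod.snd) := by
        rw [← List.unzip_fst, ← List.unzip_snd, List.zip_unzip]
      rw [e1, hl, ← hm, word, List.zip_map']
    have hw : ∀ b, ∃ S : Strategy u, IsWinning (ansState σ Q b) S q ∧ UsesKIntervals S q 4 := by
      intro b
      apply ih
      rw [word_ansState σ Q s b, ← hl']
      exact hc _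
    choose S hS hSk using hw
    refine ⟨fun bs => match bs with
      | [] => Q
      | b :: bs => S b bs, ?_, ?_⟩
    · intro bs hbs
      cases bs with
      | nil => simp at hbs
      | cons b bs => exact hS b bs (by simpa using hbs)
    · intro bs hbs
      cases bs with
      | nil => exact hQ
      | cons b bs => exact hSk b bs (by simpa using hbs)

theorem word_initState (u : ℕ) : word (initState u) = List.replicate u 0 := by
  simp [word, suppList, initState]

end UlamRenyi

namespace UlamRenyi

/-- There exists `M` such that for every `m ≥ M` there is a
perfect 4-interval strategy for the Ulam–Rényi game with 3 lies over
`U = {0,…,2^m-1}`: a winning strategy for the initial state of size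
`N_min(2^m,3)` all of whose questions are 4-interval questions. -/
theorem exists_perfect_four_interval_strategy_eventually :
    ∃ M : ℕ, ∀ m : ℕ, M ≤ m →
      ∃ S : Strategy (2 ^ m),
        IsWinning (initState (2 ^ m)) S (Nmin m) ∧
        UsesKIntervals S (Nmin m) 4 := by
  refine ⟨2 ^ 40, fun m hm => exists_strategy (Nmin m) (initState (2 ^ m)) ?_⟩
  obtain ⟨hmN, hwin⟩ := typeWin_after_opening hm
  have hopen := typeWin_opening m 0 (Nmin m - m) (by simpa using hwin)
  rw [Nat.sub_add_cancel hmN] at hopen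
  have hshape : Shape (List.replicate (2 ^ m) 0) := by
    have h := shape_expand (q := [(2 ^ m, 0)])
      (by simp only [List.map]; decide +kernel)
    simpa [expand] using h
  rw [word_initState]
  exact hopen _ hshape (by simp) (by simp [List.count_replicate]) (by simp [List.count_replicate])
    (by simp [List.count_replicate])

end UlamRenyi
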